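/- arXiv:2407.08031 — 3 statements merged into one kernel-verified Lean document; each statement's English description precedes it below -/
import Mathlib

section
/- Let γ, δ₀ and the test measures be as in the planar curve setup, with x₀ = γ(0) and R = R(0). Let σ, ε : (0, δ₀] → (0, ∞) satisfy max(σ(δ), ε(δ)) ≤ δ/4 for all δ, suppose there are constants c, C' > 0 with c·δ ≤ ε(δ) ≤ C'·δ for all δ (ε = Θ(δ)), and suppose σ(δ)/δ → 0 as δ → 0⁺ (σ = o(δ)). Then lim_{δ→0⁺} (6/ε(δ)²)·( 1 − W₁(μ_{x₀}^{σ(δ),ε(δ)}, μ_{γ(δ)}^{σ(δ),ε(δ)}) / ‖x₀ − γ(δ)‖ ) = 1/R². -/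
open MeasureTheory Set Filter

/-- The 1-Wasserstein distance: infimum over couplings of the integral of the distance. -/
noncomputable def W1 {X : Type*} [MeasurableSpace X] [PseudoMetricSpace X]
    (μ ν : Measure X) : ℝ :=
  sInf { c : ℝ | ∃ π : Measure (X × X), IsProbabilityMeasure π ∧
      π.map Prod.fst = μ ∧ π.map Prod.snd = ν ∧ c = ∫ p, dist p.1 p.2 ∂π }

/-- Restriction of the ambient volume measure to a set, normalized to a probability measure. -/
noncomputable def normRestrict {X : Type*} [MeasureSpace X] (s : Set X) : Measure X :=
  (volume s)⁻¹ • volume.restrict s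

lemma W1_sandwich {Z E : Type*} [MeasurableSpace Z] [NormedAddCommGroup E] [InnerProductSpace ℝ E]
    [MeasurableSpace E] [BorelSpace E] [SecondCountableTopology E]
    (m0 m1 : Measure Z) [IsProbabilityMeasure m0] [IsProbabilityMeasure m1]
    (φ : Z → E) (hφ : Measurable φ) (τ : Z → Z) (hτ : Measurable τ)
    (l : ℝ) (hl0 : 0 ≤ l) (hle : ENNReal.ofReal l • m0.map τ ≤ m1)
    (S0 S1 : Set Z) (h0 : ∀ᵐ p ∂m0, p ∈ S0) (h1 : ∀ᵐ p ∂m1, p ∈ S1)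
    (C : ℝ) (hC0 : ∀ p ∈ S0, ‖φ p‖ ≤ C) (hC1 : ∀ p ∈ S1, ‖φ p‖ ≤ C)
    (e : E) (he : ‖e‖ = 1) (b1 b2 : ℝ)
    (hb1 : ∀ p ∈ S0, ‖φ (τ p) - φ p‖ ≤ inner ℝ (φ (τ p) - φ p) e + b1)
    (hb2 : ∀ p ∈ S0, ∀ q ∈ S1, ‖φ q - φ p‖ ≤ inner ℝ (φ q - φ p) e + b2) :
    (∫ q, inner ℝ (φ q) e ∂m1) - (∫ q, inner ℝ (φ q) e ∂m0) ≤ W1 (m0.map φ) (m1.map φ) ∧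
    W1 (m0.map φ) (m1.map φ) ≤
      (∫ q, inner ℝ (φ q) e ∂m1) - (∫ q, inner ℝ (φ q) e ∂m0) + (l * b1 + (1 - l) * b2) := by
  have hme : Measurable (fun x : E => inner ℝ x e) := by fun_prop
  have I0 : Integrable (fun x : E => x) (m0.map φ) := by
    rw [integrable_map_measure (by fun_prop) hφ.aemeasurable]
    exact Integrable.of_bound hφ.aestronglyMeasurable C (h0.mono fun p hp => hC0 p hp)
  have I1 : Integrable (fun x : E => x) (m1.map φ) := by
    rw [integrable_map_measure (by fun_prop) hφ.aemeasurable]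
    exact Integrable.of_bound hφ.aestronglyMeasurable C (h1.mono fun p hp => hC1 p hp)
  have J0 : Integrable (fun x : E => (inner ℝ x e : ℝ)) (m0.map φ) := I0.inner_const e
  have J1 : Integrable (fun x : E => (inner ℝ x e : ℝ)) (m1.map φ) := I1.inner_const e
  -- general facts on couplings
  have key : ∀ π : Measure (E × E), π.map Prod.fst = m0.map φ → π.map Prod.snd = m1.map φ →
      Integrable (fun p : E × E => dist p.1 p.2) π ∧
      Integrable (fun p : E × E => (inner ℝ (p.2 - p.1) e : ℝ)) π ∧
      ∫ p, (inner ℝ (p.2 - p.1) e : ℝ) ∂π =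
        (∫ q, inner ℝ (φ q) e ∂m1) - (∫ q, inner ℝ (φ q) e ∂m0) := by
    intro π hp1 hp2
    rw [← hp1] at I0 J0
    rw [← hp2] at I1 J1
    have K0 : Integrable (fun p : E × E => p.1) π := I0.comp_measurable measurable_fst
    have K1 : Integrable (fun p : E × E => p.2) π := I1.comp_measurable measurable_snd
    have L0 : Integrable (fun p : E × E => (inner ℝ p.1 e : ℝ)) π := K0.inner_const e
    have L1 : Integrable (fun p : E × E => (inner ℝ p.2 e : ℝ)) π := K1.inner_const e
    refine ⟨?_, ?_, ?_⟩
    · simp_rw [dist_eq_norm]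
      exact (K0.sub K1).norm
    · simp_rw [inner_sub_left]
      exact L1.sub L0
    · simp_rw [inner_sub_left]
      rw [integral_sub L1 L0]
      congr 1
      · rw [← integral_map (φ := φ) (f := fun x : E => (inner ℝ x e : ℝ)) hφ.aemeasurable
          hme.aestronglyMeasurable, ← hp2, integral_map measurable_snd.aemeasurable
          hme.aestronglyMeasurable]
      · rw [← integral_map (φ := φ) (f := fun x : E => (inner ℝ x e : ℝ)) hφ.aemeasurable
          hme.aestronglyMeasurable, ← hp1, integral_map measurable_fst.aemeasurable
          hme.aestronglyMeasurable]
  set M := (∫ q, inner ℝ (φ q) e ∂m1) - (∫ q, inner ℝ (φ q) e ∂m0) with hM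
  have low : ∀ c ∈ { c : ℝ | ∃ π : Measure (E × E), IsProbabilityMeasure π ∧
      π.map Prod.fst = m0.map φ ∧ π.map Prod.snd = m1.map φ ∧ c = ∫ p, dist p.1 p.2 ∂π },
      M ≤ c := by
    rintro c ⟨π, hπ, hp1, hp2, rfl⟩
    obtain ⟨a1, a2, a3⟩ := key π hp1 hp2
    rw [← a3]
    refine integral_mono a2 a1 fun p => ?_
    have := real_inner_le_norm (p.2 - p.1) e
    rw [he, mul_one] at this
    rw [dist_comm, dist_eq_norm]
    exact this
  have hfin : IsFiniteMeasure (ENNReal.ofReal l • m0.map τ) := 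
    isFiniteMeasure_of_le m1 hle
  set ρ := m1 - ENNReal.ofReal l • m0.map τ with hρ
  have hsub : ρ + ENNReal.ofReal l • m0.map τ = m1 := Measure.sub_add_cancel_of_le hle
  have hρle : ρ ≤ m1 := Measure.sub_le
  have : IsFiniteMeasure ρ := isFiniteMeasure_of_le m1 hρle
  have hτp : IsProbabilityMeasure (m0.map τ) := Measure.isProbabilityMeasure_map hτ.aemeasurable
  have hmass : ρ univ + ENNReal.ofReal l = 1 := by
    have := congrArg (fun m : Measure Z => m univ) hsub
    simpa using this
  have hmassr : ρ.real univ = 1 - l := by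
    have := congrArg ENNReal.toReal hmass
    rw [ENNReal.toReal_add (measure_ne_top _ _) ENNReal.ofReal_ne_top,
      ENNReal.toReal_ofReal hl0] at this
    simp only [ENNReal.toReal_one] at this
    rw [Measure.real]; linarith
  set f1 : Z → E × E := fun p => (φ p, φ (τ p)) with hf1
  set f2 : Z × Z → E × E := fun p => (φ p.1, φ p.2) with hf2
  have mf1 : Measurable f1 := by fun_prop
  have mf2 : Measurable f2 := by fun_prop
  set P := m0.map f1
  set Q := (m0.prod ρ).map f2
  set π := ENNReal.ofReal l • P + Q with hπ
  have hfst : π.map Prod.fst = m0.map φ := by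
    rw [hπ, Measure.map_add _ _ measurable_fst, Measure.map_smul,
      Measure.map_map measurable_fst mf1, Measure.map_map measurable_fst mf2]
    have e1 : (Prod.fst ∘ f1) = φ := rfl
    have e2 : (Prod.fst ∘ f2) = φ ∘ Prod.fst := rfl
    rw [e1, e2, ← Measure.map_map hφ measurable_fst, Measure.map_fst_prod, Measure.map_smul,
      ← add_smul, add_comm, hmass, one_smul]
  have hsnd : π.map Prod.snd = m1.map φ := by
    rw [hπ, Measure.map_add _ _ measurable_snd, Measure.map_smul,
      Measure.map_map measurable_snd mf1, Measure.map_map measurable_snd mf2]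
    have e1 : (Prod.snd ∘ f1) = φ ∘ τ := rfl
    have e2 : (Prod.snd ∘ f2) = φ ∘ Prod.snd := rfl
    rw [e1, e2, ← Measure.map_map hφ measurable_snd, Measure.map_snd_prod, measure_univ, one_smul,
      ← Measure.map_map hφ hτ, ← Measure.map_smul, ← Measure.map_add _ _ hφ, add_comm, hsub]
  have hprob : IsProbabilityMeasure π := by
    constructor
    have h := congrArg (fun m : Measure E => m univ) hfst
    simp only [Measure.map_apply measurable_fst MeasurableSet.univ,
      Measure.map_apply hφ MeasurableSet.univ, preimage_univ, measure_univ] at h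
    exact h
  have hmem : (∫ p, dist p.1 p.2 ∂π) ∈ { c : ℝ | ∃ π : Measure (E × E), IsProbabilityMeasure π ∧
      π.map Prod.fst = m0.map φ ∧ π.map Prod.snd = m1.map φ ∧ c = ∫ p, dist p.1 p.2 ∂π } :=
    ⟨π, hprob, hfst, hsnd, rfl⟩
  constructor
  · exact le_csInf ⟨_, hmem⟩ low
  · refine (csInf_le ⟨M, low⟩ hmem).trans ?_
    obtain ⟨a1, a2, a3⟩ := key π hfst hsnd
    have hI : Integrable (fun p : E × E => dist p.1 p.2 - (inner ℝ (p.2 - p.1) e : ℝ)) π :=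
      a1.sub a2
    have hd : (∫ p, dist p.1 p.2 ∂π) - M =
        ∫ p, (dist p.1 p.2 - (inner ℝ (p.2 - p.1) e : ℝ)) ∂π := by
      rw [integral_sub a1 a2, a3]
    suffices h : ∫ p, (dist p.1 p.2 - (inner ℝ (p.2 - p.1) e : ℝ)) ∂π ≤ l * b1 + (1 - l) * b2 by
      linarith
    have hm : Measurable (fun p : E × E => dist p.1 p.2 - (inner ℝ (p.2 - p.1) e : ℝ)) := by
      fun_prop
    have hIQ : Integrable (fun p : E × E => dist p.1 p.2 - (inner ℝ (p.2 - p.1) e : ℝ)) Q :=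
      (integrable_add_measure.1 hI).2
    have hIP := (integrable_add_measure.1 hI).1
    rw [hπ, integral_add_measure hIP hIQ, integral_smul_measure, ENNReal.toReal_ofReal hl0,
      smul_eq_mul]
    have i1 : ∫ p, (dist p.1 p.2 - (inner ℝ (p.2 - p.1) e : ℝ)) ∂P ≤ b1 := by
      have hPint : Integrable (fun p : E × E => dist p.1 p.2 - (inner ℝ (p.2 - p.1) e : ℝ)) P ∨
          ¬ Integrable (fun p : E × E => dist p.1 p.2 - (inner ℝ (p.2 - p.1) e : ℝ)) P := em _
      have : IsProbabilityMeasure P := Measure.isProbabilityMeasure_map mf1.aemeasurable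
      have hae : ∀ᵐ p ∂P, dist p.1 p.2 - (inner ℝ (p.2 - p.1) e : ℝ) ≤ b1 := by
        refine (ae_map_iff mf1.aemeasurable (measurableSet_le hm measurable_const)).2 ?_
        filter_upwards [h0] with p hp
        have := hb1 p hp
        rw [dist_comm, dist_eq_norm]
        simp only [hf1]
        linarith
      have hpos : ∀ p : E × E, 0 ≤ dist p.1 p.2 - (inner ℝ (p.2 - p.1) e : ℝ) := by
        intro p
        have := real_inner_le_norm (p.2 - p.1) e
        rw [he, mul_one] at this
        rw [dist_comm, dist_eq_norm]; linarith
      have hPi : Integrable (fun p : E × E => dist p.1 p.2 - (inner ℝ (p.2 - p.1) e : ℝ)) P := by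
        refine Integrable.of_bound hm.aestronglyMeasurable b1 ?_
        filter_upwards [hae] with p hp
        rw [Real.norm_of_nonneg (hpos p)]; exact hp
      calc _ ≤ ∫ p, b1 ∂P := integral_mono_ae hPi (integrable_const _) hae
        _ = b1 := by simp
    have i2 : ∫ p, (dist p.1 p.2 - (inner ℝ (p.2 - p.1) e : ℝ)) ∂Q ≤ (1 - l) * b2 := by
      have hae : ∀ᵐ p ∂Q, dist p.1 p.2 - (inner ℝ (p.2 - p.1) e : ℝ) ≤ b2 := by
        refine (ae_map_iff mf2.aemeasurable (measurableSet_le hm measurable_const)).2 ?_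
        have q0 : ∀ᵐ p ∂(m0.prod ρ), p.1 ∈ S0 := Measure.quasiMeasurePreserving_fst.ae h0
        have q1 : ∀ᵐ p ∂(m0.prod ρ), p.2 ∈ S1 :=
          Measure.quasiMeasurePreserving_snd.ae (ae_mono hρle h1)
        filter_upwards [q0, q1] with p hp hq
        have := hb2 _ hp _ hq
        rw [dist_comm, dist_eq_norm]
        simp only [hf2]
        linarith
      have : IsFiniteMeasure Q := by
        simp only [Q]; infer_instance
      calc _ ≤ ∫ p, b2 ∂Q := integral_mono_ae hIQ (integrable_const _) hae
        _ = (1 - l) * b2 := by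
          rw [integral_const, smul_eq_mul, ← hmassr]
          congr 1
          simp only [Measure.real, Q]
          rw [Measure.map_apply mf2 MeasurableSet.univ, preimage_univ, ← univ_prod_univ,
            Measure.prod_prod, measure_univ, one_mul]
    gcongr

abbrev E2 := EuclideanSpace ℝ (Fin 2)

lemma inner_E2 (x y : E2) : inner ℝ x y = x 0 * y 0 + x 1 * y 1 := by
  rw [PiLp.inner_apply, Fin.sum_univ_two]
  simp [mul_comm]

lemma normsq_E2 (x : E2) : ‖x‖ ^ 2 = x 0 ^ 2 + x 1 ^ 2 := by
  rw [← real_inner_self_eq_norm_sq, inner_E2]; ring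

lemma eq_zero_of_orth (u v x : E2) (hu : ‖u‖ = 1) (hv : ‖v‖ = 1) (huv : inner ℝ u v = 0)
    (h1 : inner ℝ x u = 0) (h2 : inner ℝ x v = 0) : x = 0 := by
  have a := normsq_E2 u
  have b := normsq_E2 v
  rw [hu] at a
  rw [hv] at b
  rw [inner_E2] at huv h1 h2
  have hD : (u 0 * v 1 - u 1 * v 0) ^ 2 = 1 := by
    have : (u 0 * v 1 - u 1 * v 0) ^ 2 = (u 0 ^ 2 + u 1 ^ 2) * (v 0 ^ 2 + v 1 ^ 2)
      - (u 0 * v 0 + u 1 * v 1) ^ 2 := by ring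
    rw [this, ← a, ← b, huv]; norm_num
  have hD0 : (u 0 * v 1 - u 1 * v 0) ≠ 0 := by
    intro h; rw [h] at hD; norm_num at hD
  have x0 : x 0 * (u 0 * v 1 - u 1 * v 0) = 0 := by linear_combination v 1 * h1 - u 1 * h2
  have x1 : x 1 * (u 0 * v 1 - u 1 * v 0) = 0 := by linear_combination u 0 * h2 - v 0 * h1
  ext i
  fin_cases i
  · simpa [hD0] using x0
  · simpa [hD0] using x1

lemma volume_image_eq (γ γ1 n : ℝ → E2) (κ : ℝ → ℝ) (φ : ℝ × ℝ → E2)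
    (hφ : ∀ p : ℝ × ℝ, φ p = γ p.1 + p.2 • n p.1) (B : Set (ℝ × ℝ)) (hB : MeasurableSet B)
    (hinj : InjOn φ B)
    (d1 : ∀ p ∈ B, HasDerivAt γ (γ1 p.1) p.1)
    (d2 : ∀ p ∈ B, HasDerivAt n (-(κ p.1 • γ1 p.1)) p.1)
    (u1 : ∀ p ∈ B, ‖γ1 p.1‖ = 1) (u2 : ∀ p ∈ B, ‖n p.1‖ = 1)
    (u3 : ∀ p ∈ B, inner ℝ (γ1 p.1) (n p.1) = 0)
    (hJ : ∀ p ∈ B, 0 ≤ 1 - κ p.1 * p.2) :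
    volume (φ '' B) = ∫⁻ p in B, ENNReal.ofReal (1 - κ p.1 * p.2) := by
  set ψ : E2 → ℝ × ℝ := fun x => (x 0, x 1) with hψ
  have hψm : MeasurePreserving ψ volume volume := by
    have h1 := (EuclideanSpace.volume_preserving_symm_measurableEquiv_toLp (Fin 2))
    have h2 := (volume_preserving_finTwoArrow ℝ)
    exact h2.comp h1
  have hψe : MeasurableEmbedding ψ := by
    have h1 := (MeasurableEquiv.toLp 2 (Fin 2 → ℝ)).symm.measurableEmbedding
    have h2 := (MeasurableEquiv.finTwoArrow (α := ℝ)).measurableEmbedding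
    exact h2.comp h1
  have hinjψ : Function.Injective ψ := hψe.injective
  have e1 : volume (φ '' B) = volume ((ψ ∘ φ) '' B) := by
    rw [image_comp, ← hψm.measure_preimage_emb hψe, hinjψ.preimage_image]
  set F' : ℝ × ℝ → (ℝ × ℝ →L[ℝ] ℝ × ℝ) := fun p =>
    (Matrix.toLin (.finTwoProd ℝ) (.finTwoProd ℝ)
    !![(1 - κ p.1 * p.2) * γ1 p.1 0, n p.1 0; (1 - κ p.1 * p.2) * γ1 p.1 1, n p.1 1]).toContinuousLinearMap
    with hF'
  have hd : ∀ p ∈ B, HasFDerivAt (ψ ∘ φ) (F' p) p := by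
    intro p hp
    simp only [hF']
    rw [Matrix.toLin_finTwoProd_toContinuousLinearMap]
    have hc : ∀ i, HasDerivAt (fun s => γ s i) (γ1 p.1 i) p.1 := fun i =>
      (EuclideanSpace.proj i : E2 →L[ℝ] ℝ).hasFDerivAt.comp_hasDerivAt _ (d1 p hp)
    have hc2 : ∀ i, HasDerivAt (fun s => n s i) (-(κ p.1 * γ1 p.1 i)) p.1 := fun i => by
      have := (EuclideanSpace.proj i : E2 →L[ℝ] ℝ).hasFDerivAt.comp_hasDerivAt _ (d2 p hp)
      simpa [Function.comp_def] using this
    have hcc : ∀ i, HasFDerivAt (fun q : ℝ × ℝ => γ q.1 i + q.2 * n q.1 i)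
        (((1 - κ p.1 * p.2) * γ1 p.1 i) • ContinuousLinearMap.fst ℝ ℝ ℝ
          + (n p.1 i) • ContinuousLinearMap.snd ℝ ℝ ℝ) p := by
      intro i
      have h1 := (hc i).comp_hasFDerivAt p (hasFDerivAt_fst (𝕜 := ℝ) (p := p))
      have h2 := (hc2 i).comp_hasFDerivAt p (hasFDerivAt_fst (𝕜 := ℝ) (p := p))
      have h3 := h1.add ((hasFDerivAt_snd (𝕜 := ℝ) (p := p)).mul h2)
      convert! h3 using 1
      ext <;> simp <;> ring
    have := (hcc 0).prodMk (hcc 1)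
    refine this.congr_of_eventuallyEq (Eventually.of_forall fun q => ?_)
    simp [hψ, hφ]
  have hdet : ∀ p ∈ B, |(F' p).det| = 1 - κ p.1 * p.2 := by
    intro p hp
    have : (F' p).det = (1 - κ p.1 * p.2) * (γ1 p.1 0 * n p.1 1 - γ1 p.1 1 * n p.1 0) := by
      simp only [hF', LinearMap.det_toContinuousLinearMap, LinearMap.det_toLin,
        Matrix.det_fin_two_of]
      ring
    have a := normsq_E2 (γ1 p.1)
    have b := normsq_E2 (n p.1)
    have c := u3 p hp
    rw [u1 p hp] at a
    rw [u2 p hp] at b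
    rw [inner_E2] at c
    have hD : |γ1 p.1 0 * n p.1 1 - γ1 p.1 1 * n p.1 0| = 1 := by
      rw [← sq_eq_sq₀ (abs_nonneg _) zero_le_one, sq_abs]
      have : (γ1 p.1 0 * n p.1 1 - γ1 p.1 1 * n p.1 0) ^ 2
        = (γ1 p.1 0 ^ 2 + γ1 p.1 1 ^ 2) * (n p.1 0 ^ 2 + n p.1 1 ^ 2)
        - (γ1 p.1 0 * n p.1 0 + γ1 p.1 1 * n p.1 1) ^ 2 := by ring
      rw [this, ← a, ← b, c]; norm_num
    rw [this, abs_mul, hD, mul_one, abs_of_nonneg (hJ p hp)]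
  rw [e1, ← lintegral_abs_det_fderiv_eq_addHaar_image volume hB
    (fun p hp => (hd p hp).hasFDerivWithinAt) (hinjψ.comp_injOn hinj)]
  refine setLIntegral_congr_fun hB fun p hp => ?_
  simp only [hdet p hp]

/-- fibrewise integration -/
lemma box_integral (a b σ : ℝ) (hσ : 0 < σ) (κ f g : ℝ → ℝ)
    (hκ : ContinuousOn κ (Icc a b)) (hf : ContinuousOn f (Icc a b)) (hg : ContinuousOn g (Icc a b)) :
    IntegrableOn (fun p : ℝ × ℝ => (1 - κ p.1 * p.2) * (f p.1 + p.2 * g p.1))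
      (Ioo a b ×ˢ Ioo (-σ) σ) volume ∧
    ∫ p in Ioo a b ×ˢ Ioo (-σ) σ, (1 - κ p.1 * p.2) * (f p.1 + p.2 * g p.1) =
      ∫ s in Ioo a b, 2 * σ * (f s - σ ^ 2 / 3 * (κ s * g s)) := by
  have hI : IntegrableOn (fun p : ℝ × ℝ => (1 - κ p.1 * p.2) * (f p.1 + p.2 * g p.1))
      (Ioo a b ×ˢ Ioo (-σ) σ) volume := by
    have hc : ContinuousOn (fun p : ℝ × ℝ => (1 - κ p.1 * p.2) * (f p.1 + p.2 * g p.1))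
        (Icc a b ×ˢ Icc (-σ) σ) := by
      have m : MapsTo (Prod.fst : ℝ × ℝ → ℝ) (Icc a b ×ˢ Icc (-σ) σ) (Icc a b) :=
        fun p hp => hp.1
      have k1 := hκ.comp continuousOn_fst m
      have k2 := hf.comp continuousOn_fst m
      have k3 := hg.comp continuousOn_fst m
      exact (continuousOn_const.sub (k1.mul continuousOn_snd)).mul
        (k2.add (continuousOn_snd.mul k3))
    exact (hc.integrableOn_compact (isCompact_Icc.prod isCompact_Icc)).mono_set
      (prod_mono Ioo_subset_Icc_self Ioo_subset_Icc_self)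
  refine ⟨hI, ?_⟩
  rw [Measure.volume_eq_prod] at hI ⊢
  rw [setIntegral_prod _ hI]
  congr 1
  ext s
  rw [← integral_Ioc_eq_integral_Ioo, ← intervalIntegral.integral_of_le (by linarith)]
  have : ∀ y : ℝ, (1 - κ s * y) * (f s + y * g s) =
      f s + (g s - κ s * f s) * y - (κ s * g s) * y ^ 2 := fun y => by ring
  simp only [this]
  rw [intervalIntegral.integral_sub, intervalIntegral.integral_add,
    intervalIntegral.integral_const_mul, intervalIntegral.integral_const_mul]
  · simp
    ring
  all_goals exact Continuous.intervalIntegrable (by fun_prop) _ _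

noncomputable def boxM (κ : ℝ → ℝ) (a b σ : ℝ) : Measure (ℝ × ℝ) :=
  (ENNReal.ofReal (2 * σ * (b - a)))⁻¹ • (volume.restrict (Ioo a b ×ˢ Ioo (-σ) σ)).withDensity
    (fun p => ENNReal.ofReal (1 - κ p.1 * p.2))

lemma boxM_apply (κ : ℝ → ℝ) (a b σ : ℝ) (A : Set (ℝ × ℝ)) (hA : MeasurableSet A) :
    boxM κ a b σ A = (ENNReal.ofReal (2 * σ * (b - a)))⁻¹ *
      ∫⁻ p in A ∩ (Ioo a b ×ˢ Ioo (-σ) σ), ENNReal.ofReal (1 - κ p.1 * p.2) := by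
  rw [boxM, Measure.smul_apply, withDensity_apply _ hA, Measure.restrict_restrict hA, smul_eq_mul]

lemma boxM_facts (γ γ1 n : ℝ → E2) (κ : ℝ → ℝ) (φ : ℝ × ℝ → E2)
    (hφ : ∀ p : ℝ × ℝ, φ p = γ p.1 + p.2 • n p.1) (a b σ : ℝ) (hab : a < b) (hσ : 0 < σ)
    (hκ : Continuous κ) (hγ : Continuous γ) (hn : ContinuousOn n (Icc a b)) (hφm : Measurable φ)
    (hinj : InjOn φ (Ioo a b ×ˢ Ioo (-σ) σ))
    (d1 : ∀ s ∈ Icc a b, HasDerivAt γ (γ1 s) s)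
    (d2 : ∀ s ∈ Icc a b, HasDerivAt n (-(κ s • γ1 s)) s)
    (u1 : ∀ s ∈ Icc a b, ‖γ1 s‖ = 1) (u2 : ∀ s ∈ Icc a b, ‖n s‖ = 1)
    (u3 : ∀ s ∈ Icc a b, inner ℝ (γ1 s) (n s) = 0)
    (hJ : ∀ p ∈ Ioo a b ×ˢ Ioo (-σ) σ, 0 ≤ 1 - κ p.1 * p.2) :
    IsProbabilityMeasure (boxM κ a b σ) ∧
    normRestrict (φ '' (Ioo a b ×ˢ Ioo (-σ) σ)) = (boxM κ a b σ).map φ ∧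
    (∀ᵐ p ∂(boxM κ a b σ), p ∈ Ioo a b ×ˢ Ioo (-σ) σ) ∧
    ∀ e : E2, ∫ p, inner ℝ (φ p) e ∂(boxM κ a b σ) =
      (b - a)⁻¹ * ∫ s in Ioo a b, (inner ℝ (γ s) e - σ ^ 2 / 3 * (κ s * inner ℝ (n s) e)) := by
  set B : Set (ℝ × ℝ) := Ioo a b ×ˢ Ioo (-σ) σ with hB
  have hBm : MeasurableSet B := measurableSet_Ioo.prod measurableSet_Ioo
  have hpos : 0 < 2 * σ * (b - a) := by
    have : 0 < b - a := by linarith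
    positivity
  have hmass : ∫⁻ p in B, ENNReal.ofReal (1 - κ p.1 * p.2) = ENNReal.ofReal (2 * σ * (b - a)) := by
    obtain ⟨i1, i2⟩ := box_integral a b σ hσ κ (fun _ => 1) (fun _ => 0) hκ.continuousOn
      continuousOn_const continuousOn_const
    simp only [mul_zero, add_zero, mul_one, sub_zero] at i1 i2
    rw [← ofReal_integral_eq_lintegral_ofReal i1, i2]
    · congr 1
      simp [hab.le]; ring
    · exact (ae_restrict_iff' hBm).2 (Eventually.of_forall hJ)
  have hne : ENNReal.ofReal (2 * σ * (b - a)) ≠ 0 := by simpa using hpos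
  have hB1 : ∀ p ∈ B, p.1 ∈ Icc a b := fun p hp => Ioo_subset_Icc_self hp.1
  have hvol : ∀ A ⊆ B, MeasurableSet A →
      volume (φ '' A) = ∫⁻ p in A, ENNReal.ofReal (1 - κ p.1 * p.2) := by
    intro A hA hAm
    exact volume_image_eq γ γ1 n κ φ hφ A hAm (hinj.mono hA) (fun p hp => d1 _ (hB1 p (hA hp)))
      (fun p hp => d2 _ (hB1 p (hA hp))) (fun p hp => u1 _ (hB1 p (hA hp)))
      (fun p hp => u2 _ (hB1 p (hA hp))) (fun p hp => u3 _ (hB1 p (hA hp)))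
      (fun p hp => hJ p (hA hp))
  refine ⟨⟨?_⟩, ?_, ?_, ?_⟩
  · rw [boxM_apply _ _ _ _ _ MeasurableSet.univ, univ_inter, ← hB, hmass]
    exact ENNReal.inv_mul_cancel hne ENNReal.ofReal_ne_top
  · ext A hA
    rw [Measure.map_apply hφm hA, boxM_apply _ _ _ _ _ (hφm hA), ← hB,
      ← hvol _ inter_subset_right ((hφm hA).inter hBm), normRestrict, Measure.smul_apply,
      Measure.restrict_apply hA, hvol B subset_rfl hBm, hmass, smul_eq_mul]
    congr 2
    ext x
    constructor
    · rintro ⟨hx, p, hp, rfl⟩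
      exact ⟨p, ⟨hx, hp⟩, rfl⟩
    · rintro ⟨p, ⟨hx, hp⟩, rfl⟩
      exact ⟨hx, p, hp, rfl⟩
  · rw [ae_iff]
    have : {p | ¬ p ∈ B} = Bᶜ := rfl
    rw [this, boxM_apply _ _ _ _ _ hBm.compl, ← hB]
    simp
  · intro e
    obtain ⟨i1, i2⟩ := box_integral a b σ hσ κ (fun s => inner ℝ (γ s) e)
      (fun s => inner ℝ (n s) e) hκ.continuousOn (by fun_prop) (by fun_prop)
    rw [boxM, integral_smul_measure, integral_withDensity_eq_integral_toReal_smul (by fun_prop)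
      (by simp)]
    have : ∫ p in B, (ENNReal.ofReal (1 - κ p.1 * p.2)).toReal • (inner ℝ (φ p) e : ℝ) =
        ∫ p in B, (1 - κ p.1 * p.2) * (inner ℝ (γ p.1) e + p.2 * inner ℝ (n p.1) e) := by
      refine setIntegral_congr_fun hBm fun p hp => ?_
      simp only [ENNReal.toReal_ofReal (hJ p hp), hφ, inner_add_left, real_inner_smul_left,
        smul_eq_mul]
    rw [this, hB, i2, integral_const_mul, ENNReal.toReal_inv, ENNReal.toReal_ofReal hpos.le,
      smul_eq_mul, ← mul_assoc]
    congr 1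
    have : b - a ≠ 0 := by linarith
    field_simp

/-- comparison of the reflected box measure -/
lemma boxM_refl (κ : ℝ → ℝ) (δ ε σ l : ℝ) (hl0 : 0 ≤ l) (hκ : Continuous κ)
    (h : ∀ p ∈ Ioo (δ - ε) (δ + ε) ×ˢ Ioo (-σ) σ,
      l * (1 - κ (δ - p.1) * p.2) ≤ 1 - κ p.1 * p.2) :
    ENNReal.ofReal l • (boxM κ (0 - ε) (0 + ε) σ).map (fun p : ℝ × ℝ => (δ - p.1, p.2)) ≤
      boxM κ (δ - ε) (δ + ε) σ := by
  set τ : ℝ × ℝ → ℝ × ℝ := fun p : ℝ × ℝ => (δ - p.1, p.2) with hτ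
  have hτm : Measurable τ := by fun_prop
  have hmp : MeasurePreserving τ volume volume := by
    rw [Measure.volume_eq_prod]
    exact (Measure.measurePreserving_sub_left volume δ).prod (MeasurePreserving.id volume)
  have hinv : ∀ p, τ (τ p) = p := fun p => by simp [hτ]
  refine Measure.le_iff.2 fun A hA => ?_
  rw [Measure.smul_apply, Measure.map_apply hτm hA, boxM_apply _ _ _ _ _ (hτm hA),
    boxM_apply _ _ _ _ _ hA, smul_eq_mul]
  have hset : τ ⁻¹' A ∩ Ioo (0 - ε) (0 + ε) ×ˢ Ioo (-σ) σ =
      τ ⁻¹' (A ∩ Ioo (δ - ε) (δ + ε) ×ˢ Ioo (-σ) σ) := by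
    ext p
    simp only [hτ, mem_inter_iff, mem_preimage, mem_prod, mem_Ioo]
    constructor
    · rintro ⟨h1, ⟨h2, h3⟩, h4⟩
      exact ⟨h1, ⟨by linarith, by linarith⟩, h4⟩
    · rintro ⟨h1, ⟨h2, h3⟩, h4⟩
      exact ⟨h1, ⟨by linarith, by linarith⟩, h4⟩
  set D := A ∩ Ioo (δ - ε) (δ + ε) ×ˢ Ioo (-σ) σ with hD
  have hDm : MeasurableSet D := hA.inter (measurableSet_Ioo.prod measurableSet_Ioo)
  have e1 : ∫⁻ p in τ ⁻¹' D, ENNReal.ofReal (1 - κ p.1 * p.2) =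
      ∫⁻ p in D, ENNReal.ofReal (1 - κ (δ - p.1) * p.2) := by
    have := hmp.setLIntegral_comp_preimage hDm
      (f := fun p : ℝ × ℝ => ENNReal.ofReal (1 - κ (δ - p.1) * p.2)) (by fun_prop)
    rw [← this]
    simp [hτ]
  rw [hset, e1]
  have e2 : (0 + ε) - (0 - ε) = (δ + ε) - (δ - ε) := by ring
  rw [e2, mul_left_comm]
  gcongr
  rw [← lintegral_const_mul _ (by fun_prop)]
  refine setLIntegral_mono (by fun_prop) fun p hp => ?_
  rw [← ENNReal.ofReal_mul hl0]
  exact ENNReal.ofReal_le_ofReal (h p hp.2)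

lemma taylor_step {E : Type*} [NormedAddCommGroup E] [NormedSpace ℝ E]
    (f f' : ℝ → E) (a b h K : ℝ) (k : ℕ) (hK : 0 ≤ K) (hh : h ∈ Icc a b)
    (hf : ∀ y ∈ Icc a b, HasDerivAt f (f' y) y)
    (hb : ∀ y ∈ Icc a b, ‖f' y‖ ≤ K * |y - h| ^ k) (h0 : f h = 0) :
    ∀ y ∈ Icc a b, ‖f y‖ ≤ K * |y - h| ^ (k + 1) := by
  intro y hy
  have hsub : uIcc h y ⊆ Icc a b := (convex_Icc a b).ordConnected.uIcc_subset hh hy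
  have := (convex_uIcc h y).norm_image_sub_le_of_norm_hasDerivWithin_le (f := f) (f' := f')
    (C := K * |y - h| ^ k) (fun z hz => (hf z (hsub hz)).hasDerivWithinAt)
    (fun z hz => (hb z (hsub hz)).trans (by
      have : |z - h| ≤ |y - h| := abs_sub_left_of_mem_uIcc hz
      gcongr)) left_mem_uIcc right_mem_uIcc
  rw [h0, sub_zero, Real.norm_eq_abs] at this
  rw [pow_succ, ← mul_assoc]; exact this

structure Geo (γ γ1 γ2 γ3 γ4 n : ℝ → E2) (a b K : ℝ) : Prop where
  d0 : ∀ s, HasDerivAt γ (γ1 s) s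
  d1 : ∀ s, HasDerivAt γ1 (γ2 s) s
  d2 : ∀ s, HasDerivAt γ2 (γ3 s) s
  d3 : ∀ s, HasDerivAt γ3 (γ4 s) s
  dn : ∀ s ∈ Icc a b, HasDerivAt n (-(‖γ2 s‖ • γ1 s)) s
  u1 : ∀ s, ‖γ1 s‖ = 1
  un : ∀ s ∈ Icc a b, ‖n s‖ = 1
  un2 : ∀ s ∈ Icc a b, ‖γ2 s‖ • n s = γ2 s
  o1 : ∀ s ∈ Icc a b, inner ℝ (γ1 s) (n s) = 0
  K1 : 1 ≤ K
  b0 : ∀ s ∈ Icc a b, ‖γ s‖ ≤ K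
  b2 : ∀ s ∈ Icc a b, ‖γ2 s‖ ≤ K
  b3 : ∀ s ∈ Icc a b, ‖γ3 s‖ ≤ K
  b4 : ∀ s ∈ Icc a b, ‖γ4 s‖ ≤ K

namespace Geo

variable {γ γ1 γ2 γ3 γ4 n : ℝ → E2} {a b K : ℝ}

lemma lip (f f' : ℝ → E2) (a b h K : ℝ) (hK : 0 ≤ K) (hh : h ∈ Icc a b)
    (hf : ∀ y, HasDerivAt f (f' y) y)
    (hb : ∀ y ∈ Icc a b, ‖f' y‖ ≤ K) :
    ∀ y ∈ Icc a b, ‖f y - f h‖ ≤ K * |y - h| := by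
  intro y hy
  have := taylor_step (fun y => f y - f h) f' a b h K 0 hK hh (fun y _ => (hf y).sub_const _)
    (by simpa using hb) (by simp) y hy
  simpa using this

lemma t21 (G : Geo γ γ1 γ2 γ3 γ4 n a b K) {h y : ℝ} (hh : h ∈ Icc a b) (hy : y ∈ Icc a b) :
    ‖γ2 y - γ2 h‖ ≤ K * |y - h| :=
  lip γ2 γ3 a b h K (by linarith [G.K1]) hh G.d2 G.b3 y hy

lemma t11 (G : Geo γ γ1 γ2 γ3 γ4 n a b K) {h y : ℝ} (hh : h ∈ Icc a b) (hy : y ∈ Icc a b) :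
    ‖γ1 y - γ1 h‖ ≤ K * |y - h| :=
  lip γ1 γ2 a b h K (by linarith [G.K1]) hh G.d1 G.b2 y hy

lemma κ1 (G : Geo γ γ1 γ2 γ3 γ4 n a b K) {h y : ℝ} (hh : h ∈ Icc a b) (hy : y ∈ Icc a b) :
    |‖γ2 y‖ - ‖γ2 h‖| ≤ K * |y - h| :=
  (abs_norm_sub_norm_le _ _).trans (G.t21 hh hy)

lemma hd1 (h y : ℝ) (c : E2) : HasDerivAt (fun y => (y - h) • c) c y := by
  simpa using ((hasDerivAt_id y).sub_const h).smul_const c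

lemma hd2 (h y : ℝ) (c : E2) : HasDerivAt (fun y => ((y - h) ^ 2 / 2) • c) ((y - h) • c) y := by
  have := ((((hasDerivAt_id y).sub_const h).pow 2).div_const 2).smul_const c
  simp only [id] at this
  convert! this using 2
  push_cast; ring

lemma hd3 (h y : ℝ) (c : E2) :
    HasDerivAt (fun y => ((y - h) ^ 3 / 6) • c) (((y - h) ^ 2 / 2) • c) y := by
  have := ((((hasDerivAt_id y).sub_const h).pow 3).div_const 6).smul_const c
  simp only [id] at this
  convert! this using 2
  push_cast; ring

lemma t02 (G : Geo γ γ1 γ2 γ3 γ4 n a b K) {h y : ℝ} (hh : h ∈ Icc a b) (hy : y ∈ Icc a b) :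
    ‖γ y - γ h - (y - h) • γ1 h‖ ≤ K * |y - h| ^ 2 := by
  have hK : 0 ≤ K := by linarith [G.K1]
  refine taylor_step (fun y => γ y - γ h - (y - h) • γ1 h) (fun y => γ1 y - γ1 h) a b h K 1 hK hh
    (fun y _ => ((G.d0 y).sub_const _).sub (hd1 h y _)) (fun y hy => ?_) (by simp) y hy
  simpa using G.t11 hh hy

lemma t12 (G : Geo γ γ1 γ2 γ3 γ4 n a b K) {h y : ℝ} (hh : h ∈ Icc a b) (hy : y ∈ Icc a b) :
    ‖γ1 y - γ1 h - (y - h) • γ2 h‖ ≤ K * |y - h| ^ 2 := by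
  have hK : 0 ≤ K := by linarith [G.K1]
  refine taylor_step (fun y => γ1 y - γ1 h - (y - h) • γ2 h) (fun y => γ2 y - γ2 h) a b h K 1 hK hh
    (fun y _ => ((G.d1 y).sub_const _).sub (hd1 h y _)) (fun y hy => ?_) (by simp) y hy
  simpa using G.t21 hh hy

lemma t03 (G : Geo γ γ1 γ2 γ3 γ4 n a b K) {h y : ℝ} (hh : h ∈ Icc a b) (hy : y ∈ Icc a b) :
    ‖γ y - γ h - (y - h) • γ1 h - ((y - h) ^ 2 / 2) • γ2 h‖ ≤ K * |y - h| ^ 3 := by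
  have hK : 0 ≤ K := by linarith [G.K1]
  exact taylor_step (fun y => γ y - γ h - (y - h) • γ1 h - ((y - h) ^ 2 / 2) • γ2 h)
    (fun y => γ1 y - γ1 h - (y - h) • γ2 h) a b h K 2 hK hh
    (fun y _ => (((G.d0 y).sub_const _).sub (hd1 h y _)).sub (hd2 h y _))
    (fun y hy => G.t12 hh hy) (by simp) y hy

lemma t22 (G : Geo γ γ1 γ2 γ3 γ4 n a b K) {h y : ℝ} (hh : h ∈ Icc a b) (hy : y ∈ Icc a b) :
    ‖γ2 y - γ2 h - (y - h) • γ3 h‖ ≤ K * |y - h| ^ 2 := by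
  have hK : 0 ≤ K := by linarith [G.K1]
  refine taylor_step (fun y => γ2 y - γ2 h - (y - h) • γ3 h) (fun y => γ3 y - γ3 h) a b h K 1 hK hh
    (fun y _ => ((G.d2 y).sub_const _).sub (hd1 h y _)) (fun y hy => ?_) (by simp) y hy
  simpa using lip γ3 γ4 a b h K (by linarith [G.K1]) hh G.d3 G.b4 y hy

lemma t13 (G : Geo γ γ1 γ2 γ3 γ4 n a b K) {h y : ℝ} (hh : h ∈ Icc a b) (hy : y ∈ Icc a b) :
    ‖γ1 y - γ1 h - (y - h) • γ2 h - ((y - h) ^ 2 / 2) • γ3 h‖ ≤ K * |y - h| ^ 3 := by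
  have hK : 0 ≤ K := by linarith [G.K1]
  exact taylor_step (fun y => γ1 y - γ1 h - (y - h) • γ2 h - ((y - h) ^ 2 / 2) • γ3 h)
    (fun y => γ2 y - γ2 h - (y - h) • γ3 h) a b h K 2 hK hh
    (fun y _ => (((G.d1 y).sub_const _).sub (hd1 h y _)).sub (hd2 h y _))
    (fun y hy => G.t22 hh hy) (by simp) y hy

lemma t04 (G : Geo γ γ1 γ2 γ3 γ4 n a b K) {h y : ℝ} (hh : h ∈ Icc a b) (hy : y ∈ Icc a b) :
    ‖γ y - γ h - (y - h) • γ1 h - ((y - h) ^ 2 / 2) • γ2 h - ((y - h) ^ 3 / 6) • γ3 h‖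
      ≤ K * |y - h| ^ 4 := by
  have hK : 0 ≤ K := by linarith [G.K1]
  exact taylor_step (fun y => γ y - γ h - (y - h) • γ1 h - ((y - h) ^ 2 / 2) • γ2 h
      - ((y - h) ^ 3 / 6) • γ3 h)
    (fun y => γ1 y - γ1 h - (y - h) • γ2 h - ((y - h) ^ 2 / 2) • γ3 h) a b h K 3 hK hh
    (fun y _ => ((((G.d0 y).sub_const _).sub (hd1 h y _)).sub (hd2 h y _)).sub (hd3 h y _))
    (fun y hy => G.t13 hh hy) (by simp) y hy

lemma tn2 (G : Geo γ γ1 γ2 γ3 γ4 n a b K) {h y : ℝ} (hh : h ∈ Icc a b) (hy : y ∈ Icc a b) :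
    ‖n y - n h - (y - h) • (-(‖γ2 h‖ • γ1 h))‖ ≤ 2 * K ^ 2 * |y - h| ^ 2 := by
  have hK1 := G.K1
  have hK : 0 ≤ K := by linarith [G.K1]
  refine taylor_step (fun y => n y - n h - (y - h) • (-(‖γ2 h‖ • γ1 h)))
    (fun y => -(‖γ2 y‖ • γ1 y) - (-(‖γ2 h‖ • γ1 h))) a b h (2 * K ^ 2) 1 (by positivity) hh
    (fun y hy => ((G.dn y hy).sub_const _).sub (hd1 h y _)) (fun y hy => ?_) (by simp) y hy
  have e : -(‖γ2 y‖ • γ1 y) - (-(‖γ2 h‖ • γ1 h)) =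
      -((‖γ2 y‖ - ‖γ2 h‖) • γ1 y + ‖γ2 h‖ • (γ1 y - γ1 h)) := by module
  rw [e, norm_neg, pow_one]
  refine (norm_add_le _ _).trans ?_
  rw [norm_smul, norm_smul, G.u1, Real.norm_eq_abs, norm_norm, mul_one]
  have h1 := G.κ1 hh hy
  have h2 := G.t11 hh hy
  have h3 := G.b2 h hh
  have h4 : ‖γ2 h‖ * ‖γ1 y - γ1 h‖ ≤ K * (K * |y - h|) := by gcongr
  have h5 : K * |y - h| ≤ K ^ 2 * |y - h| := by
    have := abs_nonneg (y - h)
    have : K ≤ K ^ 2 := by nlinarith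
    gcongr
  nlinarith

lemma o2 (G : Geo γ γ1 γ2 γ3 γ4 n a b K) (s : ℝ) : inner ℝ (γ1 s) (γ2 s) = 0 := by
  have h1 : HasDerivAt (fun s => inner ℝ (γ1 s) (γ1 s)) (inner ℝ (γ1 s) (γ2 s) + inner ℝ (γ2 s) (γ1 s)) s :=
    (G.d1 s).inner ℝ (G.d1 s)
  have h2 : (fun s => inner ℝ (γ1 s) (γ1 s)) = fun _ => (1 : ℝ) := by
    ext s; rw [real_inner_self_eq_norm_sq, G.u1]; norm_num
  rw [h2] at h1
  have := h1.unique (hasDerivAt_const s (1 : ℝ))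
  rw [real_inner_comm (γ1 s) (γ2 s)] at this
  linarith

lemma o3 (G : Geo γ γ1 γ2 γ3 γ4 n a b K) (s : ℝ) : inner ℝ (γ3 s) (γ1 s) = - ‖γ2 s‖ ^ 2 := by
  have h1 := (G.d1 s).inner ℝ (G.d2 s)
  have h2 : (fun s => inner ℝ (γ1 s) (γ2 s)) = fun _ => (0 : ℝ) := by
    ext s; exact G.o2 s
  rw [h2] at h1
  have := h1.unique (hasDerivAt_const s (0 : ℝ))
  rw [real_inner_self_eq_norm_sq] at this
  rw [real_inner_comm]
  linarith

end Geo

lemma norm_le_of_perp (v e : E2) (he : ‖e‖ = 1) (r ω c : ℝ) (hω : ‖v - r • e‖ ≤ ω) (hc : 0 < c)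
    (hr : c + ω ≤ r) : ‖v‖ ≤ inner ℝ v e + ω ^ 2 / (2 * c) := by
  have h1 : (inner ℝ v e : ℝ) = r + inner ℝ (v - r • e) e := by
    rw [inner_sub_left, real_inner_smul_left, real_inner_self_eq_norm_sq, he]; ring
  have h2 := abs_real_inner_le_norm (v - r • e) e
  rw [he, mul_one] at h2
  have h3 : c ≤ inner ℝ v e := by
    have := (abs_le.1 h2).1
    linarith
  have h4 : ‖v - r • e‖ ^ 2 = ‖v‖ ^ 2 - 2 * (r * inner ℝ v e) + r ^ 2 := by
    rw [norm_sub_sq_real, real_inner_smul_right, norm_smul, he, mul_one, Real.norm_eq_abs, sq_abs]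
  have h5 : ‖v - r • e‖ ^ 2 ≤ ω ^ 2 := by gcongr
  set x : ℝ := inner ℝ v e
  have h6 : ‖v‖ ^ 2 ≤ x ^ 2 + ω ^ 2 := by nlinarith [sq_nonneg (x - r)]
  have h7 : ω ^ 2 ≤ 2 * x * (ω ^ 2 / (2 * c)) := by
    rw [mul_div_assoc', le_div_iff₀ (by positivity)]
    nlinarith [sq_nonneg ω]
  have h8 : 0 ≤ ω ^ 2 / (2 * c) := by positivity
  refine abs_le_of_sq_le_sq' ?_ (by linarith) |>.2
  nlinarith

namespace Geo

variable {γ γ1 γ2 γ3 γ4 n : ℝ → E2} {a b K : ℝ}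

lemma est1 (G : Geo γ γ1 γ2 γ3 γ4 n a b K) {δ σ s β : ℝ} (hδ : 0 < δ) (hδ1 : 100 * K ^ 2 * δ ≤ 1)
    (hσ : σ ≤ δ / 16) (ha : a ≤ -(δ / 4)) (hb : 5 * δ / 4 ≤ b)
    (hs : |s| ≤ δ / 4) (hβ : |β| ≤ σ) :
    ‖(γ (δ - s) + β • n (δ - s)) - (γ s + β • n s)‖ ≤
      inner ℝ ((γ (δ - s) + β • n (δ - s)) - (γ s + β • n s)) (γ1 (δ / 2)) + 72 * K ^ 4 * δ ^ 5 := by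
  have hK := G.K1
  obtain ⟨hs1, hs2⟩ := abs_le.1 hs
  have hh : δ / 2 ∈ Icc a b := ⟨by linarith, by linarith⟩
  have hy1 : δ - s ∈ Icc a b := ⟨by linarith, by linarith⟩
  have hy2 : s ∈ Icc a b := ⟨by linarith, by linarith⟩
  have hK2 : K ≤ K ^ 2 := by nlinarith
  have hKδ : 100 * K * δ ≤ 1 := by nlinarith
  have hσ0 : 0 ≤ σ := (abs_nonneg β).trans hβ
  have hbκ : |β * ‖γ2 (δ / 2)‖| ≤ 1 / 4 := by
    rw [abs_mul, abs_norm]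
    have := G.b2 _ hh
    calc |β| * ‖γ2 (δ / 2)‖ ≤ σ * K := by gcongr
      _ ≤ 1 / 4 := by nlinarith
  have key : ‖((γ (δ - s) + β • n (δ - s)) - (γ s + β • n s)) -
      ((δ - 2 * s) * (1 - β * ‖γ2 (δ / 2)‖)) • γ1 (δ / 2)‖ ≤ 6 * K ^ 2 * δ ^ 3 := by
    have e : ((γ (δ - s) + β • n (δ - s)) - (γ s + β • n s)) -
      ((δ - 2 * s) * (1 - β * ‖γ2 (δ / 2)‖)) • γ1 (δ / 2) =
      (γ (δ - s) - γ (δ / 2) - ((δ - s) - δ / 2) • γ1 (δ / 2)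
        - (((δ - s) - δ / 2) ^ 2 / 2) • γ2 (δ / 2))
      - (γ s - γ (δ / 2) - (s - δ / 2) • γ1 (δ / 2) - ((s - δ / 2) ^ 2 / 2) • γ2 (δ / 2))
      + β • ((n (δ - s) - n (δ / 2) - ((δ - s) - δ / 2) • (-(‖γ2 (δ / 2)‖ • γ1 (δ / 2))))
        - (n s - n (δ / 2) - (s - δ / 2) • (-(‖γ2 (δ / 2)‖ • γ1 (δ / 2))))) := by
      module
    rw [e]
    have h1 := G.t03 hh hy1
    have h2 := G.t03 hh hy2
    have h3 := G.tn2 hh hy1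
    have h4 := G.tn2 hh hy2
    have x1 : |(δ - s) - δ / 2| ≤ δ := abs_le.2 ⟨by linarith, by linarith⟩
    have x2 : |s - δ / 2| ≤ δ := abs_le.2 ⟨by linarith, by linarith⟩
    have y1 : K * |(δ - s) - δ / 2| ^ 3 ≤ K * δ ^ 3 := by gcongr
    have y2 : K * |s - δ / 2| ^ 3 ≤ K * δ ^ 3 := by gcongr
    have y3 : 2 * K ^ 2 * |(δ - s) - δ / 2| ^ 2 ≤ 2 * K ^ 2 * δ ^ 2 := by gcongr
    have y4 : 2 * K ^ 2 * |s - δ / 2| ^ 2 ≤ 2 * K ^ 2 * δ ^ 2 := by gcongr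
    refine (norm_add_le _ _).trans ?_
    rw [norm_smul, Real.norm_eq_abs]
    have z1 := norm_sub_le (γ (δ - s) - γ (δ / 2) - ((δ - s) - δ / 2) • γ1 (δ / 2)
        - (((δ - s) - δ / 2) ^ 2 / 2) • γ2 (δ / 2))
      (γ s - γ (δ / 2) - (s - δ / 2) • γ1 (δ / 2) - ((s - δ / 2) ^ 2 / 2) • γ2 (δ / 2))
    have z2 := norm_sub_le (n (δ - s) - n (δ / 2) - ((δ - s) - δ / 2) • (-(‖γ2 (δ / 2)‖ • γ1 (δ / 2))))
      (n s - n (δ / 2) - (s - δ / 2) • (-(‖γ2 (δ / 2)‖ • γ1 (δ / 2))))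
    have z3 : |β| * ‖(n (δ - s) - n (δ / 2) - ((δ - s) - δ / 2) • (-(‖γ2 (δ / 2)‖ • γ1 (δ / 2))))
        - (n s - n (δ / 2) - (s - δ / 2) • (-(‖γ2 (δ / 2)‖ • γ1 (δ / 2))))‖ ≤
        δ * (4 * K ^ 2 * δ ^ 2) := by
      gcongr
      · linarith
      · linarith
    have z4 : K * δ ^ 3 ≤ K ^ 2 * δ ^ 3 := by gcongr
    nlinarith
  have := norm_le_of_perp _ (γ1 (δ / 2)) (G.u1 _) _ _ (δ / 4) key (by positivity) (by
    have h1 := (abs_le.1 hbκ).2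
    have h2 : (δ / 2) * (3 / 4) ≤ (δ - 2 * s) * (1 - β * ‖γ2 (δ / 2)‖) := by
      gcongr
      · linarith
      · linarith
      · linarith
    have h3 : 6 * K ^ 2 * δ ^ 3 = (100 * K ^ 2 * δ) * (6 / 100 * δ ^ 2) := by ring
    have h4 : (100 * K ^ 2 * δ) * (6 / 100 * δ ^ 2) ≤ 1 * (6 / 100 * δ ^ 2) := by gcongr
    have h5 : δ ≤ 1 := by nlinarith
    nlinarith)
  refine this.trans_eq ?_
  congr 1
  field_simp
  ring

lemma est2 (G : Geo γ γ1 γ2 γ3 γ4 n a b K) {δ σ s t β β' : ℝ} (hδ : 0 < δ)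
    (hδ1 : 100 * K ^ 2 * δ ≤ 1)
    (hσ : σ ≤ δ / 16) (ha : a ≤ -(δ / 4)) (hb : 5 * δ / 4 ≤ b)
    (hs : |s| ≤ δ / 4) (ht : |t - δ| ≤ δ / 4) (hβ : |β| ≤ σ) (hβ' : |β'| ≤ σ) :
    ‖(γ t + β' • n t) - (γ s + β • n s)‖ ≤
      inner ℝ ((γ t + β' • n t) - (γ s + β • n s)) (γ1 (δ / 2)) + δ := by
  have hK := G.K1
  obtain ⟨hs1, hs2⟩ := abs_le.1 hs
  obtain ⟨ht1, ht2⟩ := abs_le.1 ht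
  have hh : δ / 2 ∈ Icc a b := ⟨by linarith, by linarith⟩
  have hy1 : t ∈ Icc a b := ⟨by linarith, by linarith⟩
  have hy2 : s ∈ Icc a b := ⟨by linarith, by linarith⟩
  have hK2 : K ≤ K ^ 2 := by nlinarith
  have hKδ : 100 * K * δ ≤ 1 := by nlinarith
  have key : ‖((γ t + β' • n t) - (γ s + β • n s)) - (t - s) • γ1 (δ / 2)‖ ≤ δ / 4 := by
    have e : ((γ t + β' • n t) - (γ s + β • n s)) - (t - s) • γ1 (δ / 2) =
      (γ t - γ (δ / 2) - (t - δ / 2) • γ1 (δ / 2)) - (γ s - γ (δ / 2) - (s - δ / 2) • γ1 (δ / 2))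
      + (β' • n t - β • n s) := by module
    rw [e]
    have h1 := G.t02 hh hy1
    have h2 := G.t02 hh hy2
    have x1 : |t - δ / 2| ≤ δ := abs_le.2 ⟨by linarith, by linarith⟩
    have x2 : |s - δ / 2| ≤ δ := abs_le.2 ⟨by linarith, by linarith⟩
    have y1 : K * |t - δ / 2| ^ 2 ≤ K * δ ^ 2 := by gcongr
    have y2 : K * |s - δ / 2| ^ 2 ≤ K * δ ^ 2 := by gcongr
    refine (norm_add_le _ _).trans ?_
    have z1 := norm_sub_le (γ t - γ (δ / 2) - (t - δ / 2) • γ1 (δ / 2))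
      (γ s - γ (δ / 2) - (s - δ / 2) • γ1 (δ / 2))
    have z2 := norm_sub_le (β' • n t) (β • n s)
    rw [norm_smul, norm_smul, G.un _ hy1, G.un _ hy2, Real.norm_eq_abs, Real.norm_eq_abs] at z2
    nlinarith
  have := norm_le_of_perp _ (γ1 (δ / 2)) (G.u1 _) _ _ (δ / 4) key (by positivity) (by linarith)
  refine this.trans ?_
  gcongr
  rw [div_le_iff₀ (by positivity)]
  nlinarith

lemma est3 (G : Geo γ γ1 γ2 γ3 γ4 n a b K) {δ u : ℝ} (hδ : 0 < δ)
    (ha : a ≤ -(δ / 4)) (hb : 5 * δ / 4 ≤ b) (hu : |u| ≤ δ / 4) :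
    |inner ℝ (γ (δ + u) - γ u) (γ1 (δ / 2)) -
      (δ - ‖γ2 0‖ ^ 2 * (δ ^ 3 / 4 + 3 * δ * u ^ 2) / 6)| ≤ 3 * K ^ 2 * δ ^ 4 := by
  have hK := G.K1
  obtain ⟨hs1, hs2⟩ := abs_le.1 hu
  have hh : δ / 2 ∈ Icc a b := ⟨by linarith, by linarith⟩
  have h0 : 0 ∈ Icc a b := ⟨by linarith, by linarith⟩
  have hy1 : δ + u ∈ Icc a b := ⟨by linarith, by linarith⟩
  have hy2 : u ∈ Icc a b := ⟨by linarith, by linarith⟩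
  have hK2 : K ≤ K ^ 2 := by nlinarith
  have h1 := G.t04 hh hy1
  have h2 := G.t04 hh hy2
  set e := γ1 (δ / 2) with he
  set r1 := γ (δ + u) - γ (δ / 2) - ((δ + u) - δ / 2) • e - (((δ + u) - δ / 2) ^ 2 / 2) • γ2 (δ / 2)
    - (((δ + u) - δ / 2) ^ 3 / 6) • γ3 (δ / 2) with hr1
  set r2 := γ u - γ (δ / 2) - (u - δ / 2) • e - ((u - δ / 2) ^ 2 / 2) • γ2 (δ / 2)
    - ((u - δ / 2) ^ 3 / 6) • γ3 (δ / 2) with hr2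
  have x1 : |(δ + u) - δ / 2| ≤ δ := abs_le.2 ⟨by linarith, by linarith⟩
  have x2 : |u - δ / 2| ≤ δ := abs_le.2 ⟨by linarith, by linarith⟩
  have y1 : K * |(δ + u) - δ / 2| ^ 4 ≤ K * δ ^ 4 := by gcongr
  have y2 : K * |u - δ / 2| ^ 4 ≤ K * δ ^ 4 := by gcongr
  have e1 : γ (δ + u) - γ u = δ • e + (δ * u) • γ2 (δ / 2)
      + ((δ ^ 3 / 4 + 3 * δ * u ^ 2) / 6) • γ3 (δ / 2) + (r1 - r2) := by
    rw [hr1, hr2]; module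
  have e2 : (inner ℝ (γ (δ + u) - γ u) e : ℝ) = δ
      - (δ ^ 3 / 4 + 3 * δ * u ^ 2) / 6 * ‖γ2 (δ / 2)‖ ^ 2 + inner ℝ (r1 - r2) e := by
    rw [e1, inner_add_left, inner_add_left, inner_add_left, real_inner_smul_left,
      real_inner_smul_left, real_inner_smul_left, real_inner_comm e (γ2 (δ / 2)), he, G.o2, G.o3,
      real_inner_self_eq_norm_sq, G.u1]
    ring
  rw [e2]
  have h3 : |inner ℝ (r1 - r2) e| ≤ 2 * K * δ ^ 4 := by
    have := abs_real_inner_le_norm (r1 - r2) e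
    rw [he, G.u1, mul_one] at this
    have := norm_sub_le r1 r2
    linarith
  have h4 : |‖γ2 (δ / 2)‖ ^ 2 - ‖γ2 0‖ ^ 2| ≤ K ^ 2 * δ := by
    have k1 := G.κ1 h0 hh
    rw [sub_zero, abs_of_pos (by positivity : 0 < δ / 2)] at k1
    have k2 := G.b2 _ hh
    have k3 := G.b2 _ h0
    have : ‖γ2 (δ / 2)‖ ^ 2 - ‖γ2 0‖ ^ 2 =
      (‖γ2 (δ / 2)‖ + ‖γ2 0‖) * (‖γ2 (δ / 2)‖ - ‖γ2 0‖) := by ring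
    rw [this, abs_mul, abs_of_nonneg (by positivity : 0 ≤ ‖γ2 (δ / 2)‖ + ‖γ2 0‖)]
    calc _ ≤ (2 * K) * (K * (δ / 2)) := by gcongr; linarith
      _ = K ^ 2 * δ := by ring
  have hu2 : u ^ 2 ≤ (δ / 4) ^ 2 := sq_le_sq' hs1 hs2
  have h5 : |(δ ^ 3 / 4 + 3 * δ * u ^ 2) / 6 * (‖γ2 (δ / 2)‖ ^ 2 - ‖γ2 0‖ ^ 2)| ≤
      δ ^ 3 * (K ^ 2 * δ) := by
    rw [abs_mul, abs_of_nonneg (by positivity : 0 ≤ (δ ^ 3 / 4 + 3 * δ * u ^ 2) / 6)]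
    gcongr
    nlinarith [pow_pos hδ 3]
  have h6 : K * δ ^ 4 ≤ K ^ 2 * δ ^ 4 := by gcongr
  rw [abs_le] at h3 h5 ⊢
  constructor <;> nlinarith [h3.1, h3.2, h5.1, h5.2]

lemma est4 (G : Geo γ γ1 γ2 γ3 γ4 n a b K) {δ u σ : ℝ} (hδ : 0 < δ)
    (ha : a ≤ -(δ / 4)) (hb : 5 * δ / 4 ≤ b) (hu : |u| ≤ δ / 4) (e : E2) (he : ‖e‖ = 1) :
    |σ ^ 2 / 3 * (‖γ2 (δ + u)‖ * inner ℝ (n (δ + u)) e) -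
      σ ^ 2 / 3 * (‖γ2 u‖ * inner ℝ (n u) e)| ≤ K * σ ^ 2 * δ := by
  have hK := G.K1
  obtain ⟨hs1, hs2⟩ := abs_le.1 hu
  have hy1 : δ + u ∈ Icc a b := ⟨by linarith, by linarith⟩
  have hy2 : u ∈ Icc a b := ⟨by linarith, by linarith⟩
  rw [← real_inner_smul_left (n (δ + u)) e, ← real_inner_smul_left (n u) e, G.un2 _ hy1, G.un2 _ hy2, ← mul_sub,
    ← inner_sub_left, abs_mul, abs_of_nonneg (by positivity : 0 ≤ σ ^ 2 / 3)]
  have h1 := G.t21 hy2 hy1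
  have h2 := abs_real_inner_le_norm (γ2 (δ + u) - γ2 u) e
  rw [he, mul_one] at h2
  rw [show δ + u - u = δ by ring, abs_of_pos hδ] at h1
  calc _ ≤ σ ^ 2 / 3 * (K * δ) := by gcongr; exact h2.trans h1
    _ ≤ K * σ ^ 2 * δ := by nlinarith [show 0 ≤ K * σ ^ 2 * δ by positivity]

end Geo

set_option maxHeartbeats 4000000 in
lemma Geo.main_est {γ γ1 γ2 γ3 γ4 n : ℝ → E2} {a b K : ℝ}
    (G : Geo γ γ1 γ2 γ3 γ4 n a b K) (φ : ℝ × ℝ → E2)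
    (hφ : ∀ p : ℝ × ℝ, φ p = γ p.1 + p.2 • n p.1) (hφm : Measurable φ)
    {δ σ ε : ℝ} (hδ : 0 < δ) (hδ1 : 100 * K ^ 2 * δ ≤ 1)
    (hσ0 : 0 < σ) (hε0 : 0 < ε) (hε : ε ≤ δ / 4)
    (hσ : σ ≤ δ / 16) (ha : a ≤ -(δ / 4)) (hb : 5 * δ / 4 ≤ b)
    (hinj : InjOn φ (Icc (-(δ / 4)) (5 * δ / 4) ×ˢ Icc (-σ) σ)) :
    |‖γ 0 - γ δ‖ - W1 (normRestrict (φ '' (Ioo (0 - ε) (0 + ε) ×ˢ Ioo (-σ) σ)))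
        (normRestrict (φ '' (Ioo (δ - ε) (δ + ε) ×ˢ Ioo (-σ) σ))) - ‖γ2 0‖ ^ 2 * δ * ε ^ 2 / 6|
      ≤ 100 * K ^ 4 * (δ ^ 4 + σ * δ ^ 2) ∧
    |‖γ 0 - γ δ‖ - δ| ≤ 100 * K ^ 4 * δ ^ 2 := by
  have hK := G.K1
  have hK2 : K ≤ K ^ 2 := by nlinarith
  have hKδ : 100 * K * δ ≤ 1 := by nlinarith
  have hδ1' : δ ≤ 1 / 100 := by nlinarith
  set κ : ℝ → ℝ := fun s => ‖γ2 s‖ with hκ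
  have cγ2 : Continuous γ2 := continuous_iff_continuousAt.2 fun s => (G.d2 s).continuousAt
  have cγ : Continuous γ := continuous_iff_continuousAt.2 fun s => (G.d0 s).continuousAt
  have cκ : Continuous κ := cγ2.norm
  set e := γ1 (δ / 2) with he
  have he1 : ‖e‖ = 1 := G.u1 _
  have hJ : ∀ s ∈ Icc a b, ∀ β ∈ Ioo (-σ) σ, 1 / 2 ≤ 1 - κ s * β := by
    intro s hs β hβ
    have h1 : κ s * β ≤ K * σ := by
      have := G.b2 s hs
      have : κ s * β ≤ κ s * σ := by
        have := norm_nonneg (γ2 s)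
        exact mul_le_mul_of_nonneg_left hβ.2.le this
      exact this.trans (by gcongr)
    nlinarith
  -- facts for both measures
  have facts : ∀ t, a ≤ t - ε → t + ε ≤ b → -(δ / 4) ≤ t - ε → t + ε ≤ 5 * δ / 4 →
      IsProbabilityMeasure (boxM κ (t - ε) (t + ε) σ) ∧
      normRestrict (φ '' (Ioo (t - ε) (t + ε) ×ˢ Ioo (-σ) σ)) = (boxM κ (t - ε) (t + ε) σ).map φ ∧
      (∀ᵐ p ∂(boxM κ (t - ε) (t + ε) σ), p ∈ Ioo (t - ε) (t + ε) ×ˢ Ioo (-σ) σ) ∧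
      ∀ e : E2, ∫ p, inner ℝ (φ p) e ∂(boxM κ (t - ε) (t + ε) σ) =
        ((t + ε) - (t - ε))⁻¹ * ∫ s in Ioo (t - ε) (t + ε),
          (inner ℝ (γ s) e - σ ^ 2 / 3 * (κ s * inner ℝ (n s) e)) :=
    fun t h1 h2 h3 h4 =>
      have hI : ∀ s ∈ Icc (t - ε) (t + ε), s ∈ Icc a b := fun s hs =>
        ⟨h1.trans hs.1, hs.2.trans h2⟩
      boxM_facts γ γ1 n κ φ hφ (t - ε) (t + ε) σ (by linarith) hσ0 cκ cγ
        (fun s hs => (G.dn s (hI s hs)).continuousAt.continuousWithinAt) hφm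
        (hinj.mono (Set.prod_mono (Ioo_subset_Icc_self.trans (Icc_subset_Icc h3 h4))
          Ioo_subset_Icc_self))
        (fun s _ => G.d0 s) (fun s hs => G.dn s (hI s hs)) (fun s _ => G.u1 s)
        (fun s hs => G.un s (hI s hs)) (fun s hs => G.o1 s (hI s hs))
        (fun p hp => by
          have := hJ p.1 (hI _ (Ioo_subset_Icc_self hp.1)) p.2 hp.2
          linarith)
  obtain ⟨p0, n0, s0, m0⟩ := facts 0 (by linarith) (by linarith) (by linarith) (by linarith)
  obtain ⟨p1, n1, s1, m1⟩ := facts δ (by linarith) (by linarith) (by linarith) (by linarith)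
  have hl0 : 0 ≤ 1 - 8 * K * δ * σ := by
    have h1 : (100 * K * δ) * σ ≤ 1 * 1 := by gcongr; linarith
    have h2 : 0 ≤ K * δ * σ := by positivity
    linarith
  have hrefl := boxM_refl κ δ ε σ (1 - 8 * K * δ * σ) hl0 cκ (by
    rintro ⟨s, β⟩ ⟨hs, hβ⟩
    simp only at hs hβ ⊢
    have i1 : s ∈ Icc a b := ⟨by linarith [hs.1], by linarith [hs.2]⟩
    have i2 : δ - s ∈ Icc a b := ⟨by linarith [hs.2], by linarith [hs.1]⟩
    have h1 := hJ (δ - s) i2 β hβ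
    have h2 : |(κ s - κ (δ - s)) * β| ≤ (K * (2 * δ)) * σ := by
      rw [abs_mul]
      have h3 : |κ s - κ (δ - s)| ≤ K * (2 * δ) := by
        refine (G.κ1 i2 i1).trans ?_
        gcongr
        exact abs_le.2 ⟨by linarith [hs.1], by linarith [hs.2]⟩
      have h4 : |β| ≤ σ := abs_le.2 ⟨hβ.1.le, hβ.2.le⟩
      gcongr
    have h3 := (abs_le.1 h2).2
    have h4 : 0 ≤ K * δ * σ := by positivity
    have h5 := mul_le_mul_of_nonneg_left h1 h4
    linarith)
  have hab : ∀ {x y z : ℝ}, x ∈ Ioo (z - y) (z + y) → |x - z| ≤ y := fun h =>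
    abs_le.2 ⟨by linarith [h.1], by linarith [h.2]⟩
  have habβ : ∀ {x : ℝ}, x ∈ Ioo (-σ) σ → |x| ≤ σ := fun h =>
    abs_le.2 ⟨by linarith [h.1], by linarith [h.2]⟩
  have hbd : ∀ s ∈ Icc a b, ∀ β ∈ Ioo (-σ) σ, ‖φ (s, β)‖ ≤ K + σ := by
    intro s hs β hβ
    rw [hφ]
    refine (norm_add_le _ _).trans ?_
    rw [norm_smul, G.un s hs, mul_one, Real.norm_eq_abs]
    exact add_le_add (G.b0 s hs) (habβ hβ)
  obtain ⟨w1, w2⟩ := W1_sandwich (boxM κ (0 - ε) (0 + ε) σ) (boxM κ (δ - ε) (δ + ε) σ) φ hφm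
    (fun p => (δ - p.1, p.2)) (by fun_prop) (1 - 8 * K * δ * σ) hl0 hrefl _ _ s0 s1 (K + σ)
    (by
      rintro ⟨s, β⟩ ⟨hs, hβ⟩
      simp only at hs hβ
      exact hbd s ⟨by linarith [hs.1], by linarith [hs.2]⟩ β hβ)
    (by
      rintro ⟨s, β⟩ ⟨hs, hβ⟩
      simp only at hs hβ
      exact hbd s ⟨by linarith [hs.1], by linarith [hs.2]⟩ β hβ)
    e he1 (72 * K ^ 4 * δ ^ 5) δ
    (by
      rintro ⟨s, β⟩ ⟨hs, hβ⟩
      simp only at hs hβ ⊢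
      rw [hφ, hφ]
      have := hab hs
      rw [sub_zero] at this
      exact G.est1 hδ hδ1 hσ ha hb (this.trans hε) (habβ hβ))
    (by
      rintro ⟨s, β⟩ ⟨hs, hβ⟩ ⟨t, β'⟩ ⟨ht, hβ'⟩
      simp only at hs hβ ht hβ' ⊢
      rw [hφ, hφ]
      have := hab hs
      rw [sub_zero] at this
      exact G.est2 hδ hδ1 hσ ha hb (this.trans hε) ((hab ht).trans hε) (habβ hβ) (habβ hβ'))
  rw [← n0, ← n1] at w1 w2
  set W := W1 (normRestrict (φ '' (Ioo (0 - ε) (0 + ε) ×ˢ Ioo (-σ) σ)))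
        (normRestrict (φ '' (Ioo (δ - ε) (δ + ε) ×ˢ Ioo (-σ) σ)))
  set M := (∫ q, inner ℝ (φ q) e ∂(boxM κ (δ - ε) (δ + ε) σ)) -
    ∫ q, inner ℝ (φ q) e ∂(boxM κ (0 - ε) (0 + ε) σ) with hM
  -- the mean
  set g : ℝ → ℝ := fun s => inner ℝ (γ s) e - σ ^ 2 / 3 * (κ s * inner ℝ (n s) e) with hg
  have cn : ContinuousOn n (Icc a b) := fun s hs => (G.dn s hs).continuousAt.continuousWithinAt
  have cg : ContinuousOn g (Icc a b) := by
    have := cκ.continuousOn (s := Icc a b)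
    have := cγ.continuousOn (s := Icc a b)
    fun_prop
  have hMeq : M = (2 * ε)⁻¹ * ∫ u in (-ε)..ε, (g (δ + u) - g u) := by
    have ig : IntervalIntegrable g volume (-ε) ε := by
      refine (cg.mono ?_).intervalIntegrable
      rw [uIcc_of_le (by linarith)]
      exact Icc_subset_Icc (by linarith) (by linarith)
    have ig1 : IntervalIntegrable (fun u => g (δ + u)) volume (-ε) ε := by
      refine ContinuousOn.intervalIntegrable ?_
      rw [uIcc_of_le (by linarith)]
      exact cg.comp (by fun_prop) fun u hu => ⟨by linarith [hu.1], by linarith [hu.2]⟩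
    rw [intervalIntegral.integral_sub ig1 ig, intervalIntegral.integral_comp_add_left, hM, m0 e,
      m1 e, ← integral_Ioc_eq_integral_Ioo, ← integral_Ioc_eq_integral_Ioo,
      ← intervalIntegral.integral_of_le (by linarith),
      ← intervalIntegral.integral_of_le (by linarith)]
    have e1 : δ + ε - (δ - ε) = 2 * ε := by ring
    have e2 : 0 + ε - (0 - ε) = 2 * ε := by ring
    rw [e1, e2, zero_add, zero_sub, ← sub_eq_add_neg]
    ring
  set q : ℝ → ℝ := fun u => δ - ‖γ2 0‖ ^ 2 * (δ ^ 3 / 4 + 3 * δ * u ^ 2) / 6 with hq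
  have hqi : ∫ u in (-ε)..ε, q u = 2 * ε * (δ - ‖γ2 0‖ ^ 2 * (δ ^ 3 / 4 + δ * ε ^ 2) / 6) := by
    have : ∀ u, q u = (δ - ‖γ2 0‖ ^ 2 * δ ^ 3 / 24) - (‖γ2 0‖ ^ 2 * δ / 2) * u ^ 2 := fun u => by
      simp only [hq]; ring
    simp only [this]
    rw [intervalIntegral.integral_sub, intervalIntegral.integral_const_mul]
    · simp
      ring
    all_goals exact Continuous.intervalIntegrable (by fun_prop) _ _
  have hMest : |M - (δ - ‖γ2 0‖ ^ 2 * (δ ^ 3 / 4 + δ * ε ^ 2) / 6)| ≤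
      3 * K ^ 2 * δ ^ 4 + K * σ ^ 2 * δ := by
    have i1 : IntervalIntegrable (fun u => g (δ + u) - g u) volume (-ε) ε := by
      refine ContinuousOn.intervalIntegrable ?_
      rw [uIcc_of_le (by linarith)]
      exact (cg.comp (by fun_prop) fun u hu => ⟨by linarith [hu.1], by linarith [hu.2]⟩).sub
        (cg.mono (Icc_subset_Icc (by linarith) (by linarith)))
    have i2 : IntervalIntegrable q volume (-ε) ε :=
      Continuous.intervalIntegrable (by fun_prop) _ _
    have hb := intervalIntegral.norm_integral_le_of_norm_le_const (a := -ε) (b := ε)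
      (f := fun u => (g (δ + u) - g u) - q u) (C := 3 * K ^ 2 * δ ^ 4 + K * σ ^ 2 * δ) (by
      intro u hu
      rw [uIoc_of_le (by linarith)] at hu
      have hu' : |u| ≤ δ / 4 := abs_le.2 ⟨by linarith [hu.1], by linarith [hu.2]⟩
      have h3 := G.est3 hδ ha hb hu'
      have h4 := G.est4 (σ := σ) hδ ha hb hu' e he1
      rw [inner_sub_left] at h3
      rw [Real.norm_eq_abs]
      have : g (δ + u) - g u - q u = (inner ℝ (γ (δ + u)) e - inner ℝ (γ u) e - q u) -
        (σ ^ 2 / 3 * (‖γ2 (δ + u)‖ * inner ℝ (n (δ + u)) e) -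
          σ ^ 2 / 3 * (‖γ2 u‖ * inner ℝ (n u) e)) := by
        simp only [hg, hκ]; ring
      rw [this]
      exact (abs_sub _ _).trans (add_le_add h3 h4))
    rw [intervalIntegral.integral_sub i1 i2, hqi, Real.norm_eq_abs,
      show ε - -ε = 2 * ε by ring, abs_of_pos (by positivity : 0 < 2 * ε)] at hb
    have : M - (δ - ‖γ2 0‖ ^ 2 * (δ ^ 3 / 4 + δ * ε ^ 2) / 6) = (2 * ε)⁻¹ *
      ((∫ u in (-ε)..ε, (g (δ + u) - g u)) -
        2 * ε * (δ - ‖γ2 0‖ ^ 2 * (δ ^ 3 / 4 + δ * ε ^ 2) / 6)) := by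
      rw [hMeq]; field_simp
    rw [this, abs_mul, abs_of_pos (by positivity : 0 < (2 * ε)⁻¹), inv_mul_le_iff₀ (by positivity)]
    linarith
  -- the chord
  have hc1 := G.est1 (s := 0) (β := 0) hδ hδ1 hσ ha hb (by simp; positivity) (by simp; positivity)
  have hc2 := G.est3 (u := 0) hδ ha hb (by simp; positivity)
  simp only [sub_zero, zero_smul, add_zero] at hc1 hc2
  rw [norm_sub_rev] at hc1
  have hc3 := real_inner_le_norm (γ δ - γ 0) e
  rw [he1, mul_one, norm_sub_rev] at hc3
  rw [← he] at hc1 hc2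
  set D := ‖γ 0 - γ δ‖
  set X : ℝ := inner ℝ (γ δ - γ 0) e
  have hK4 : K ^ 2 ≤ K ^ 4 := by nlinarith
  have hk : ‖γ2 0‖ ^ 2 ≤ K ^ 2 := by
    have := G.b2 0 ⟨by linarith, by linarith⟩
    gcongr
  have f1 : 72 * K ^ 4 * δ ^ 5 ≤ K ^ 4 * δ ^ 4 := by
    have : 72 * K ^ 4 * δ ^ 5 = K ^ 4 * δ ^ 4 * (72 * δ) := by ring
    rw [this]
    exact mul_le_of_le_one_right (by positivity) (by linarith)
  have f2 : K * σ ^ 2 * δ ≤ K ^ 4 * (σ * δ ^ 2) := by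
    have h1 : K * σ ^ 2 * δ ≤ K * (σ * δ ^ 2) := by
      have : σ * σ * δ ≤ σ * δ * δ := by gcongr; linarith
      nlinarith
    refine h1.trans ?_
    gcongr; linarith
  have f3 : K ^ 2 * δ ^ 4 ≤ K ^ 4 * δ ^ 4 := by gcongr
  have f4 : K * (σ * δ ^ 2) ≤ K ^ 4 * (σ * δ ^ 2) := by gcongr; linarith
  have f5 : (1 - 8 * K * δ * σ) * (72 * K ^ 4 * δ ^ 5) ≤ 72 * K ^ 4 * δ ^ 5 :=
    mul_le_of_le_one_left (by positivity) (by linarith [show 0 ≤ 8 * K * δ * σ by positivity])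
  have f6 : 0 ≤ K ^ 4 * δ ^ 4 := by positivity
  have f7 : 0 ≤ K ^ 4 * (σ * δ ^ 2) := by positivity
  have f8 : 0 ≤ 72 * K ^ 4 * δ ^ 5 := by positivity
  have w2' : W ≤ M + (1 - 8 * K * δ * σ) * (72 * K ^ 4 * δ ^ 5) + 8 * (K * (σ * δ ^ 2)) := by
    linarith
  clear_value W M D X
  rw [abs_le] at hMest hc2
  obtain ⟨hm1, hm2⟩ := hMest
  obtain ⟨hx1, hx2⟩ := hc2
  refine ⟨abs_le.2 ⟨?_, ?_⟩, abs_le.2 ⟨?_, ?_⟩⟩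
  · linarith
  · linarith
  · have g1 : ‖γ2 0‖ ^ 2 * δ ^ 3 ≤ K ^ 4 * δ ^ 2 := by
      calc ‖γ2 0‖ ^ 2 * δ ^ 3 ≤ K ^ 4 * δ ^ 3 := by gcongr; linarith
        _ ≤ K ^ 4 * δ ^ 2 := by
          gcongr ?_ * ?_
          exact pow_le_pow_of_le_one hδ.le (by linarith) (by norm_num)
    have g2 : K ^ 4 * δ ^ 4 ≤ K ^ 4 * δ ^ 2 := by
      gcongr ?_ * ?_
      exact pow_le_pow_of_le_one hδ.le (by linarith) (by norm_num)
    linarith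
  · have g1 : 0 ≤ ‖γ2 0‖ ^ 2 * δ ^ 3 := by positivity
    have g2 : K ^ 4 * δ ^ 4 ≤ K ^ 4 * δ ^ 2 := by
      gcongr ?_ * ?_
      exact pow_le_pow_of_le_one hδ.le (by linarith) (by norm_num)
    linarith

lemma final_alg {δ ε σ D W k C c : ℝ} (hδ : 0 < δ) (hc : 0 < c) (hσ : 0 < σ)
    (h1 : c * δ ≤ ε) (h2 : ε ≤ δ) (hk : 0 ≤ k) (hC : 0 ≤ C) (hD : δ / 2 ≤ D)
    (h3 : |D - W - k * δ * ε ^ 2 / 6| ≤ C * (δ ^ 4 + σ * δ ^ 2)) (h4 : |D - δ| ≤ C * δ ^ 2) :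
    |6 / ε ^ 2 * (1 - W / D) - k| ≤ (12 * C * (δ + σ / δ) + 2 * k * C * δ) / c ^ 2 := by
  have hε : 0 < ε := lt_of_lt_of_le (by positivity) h1
  have hD0 : 0 < D := lt_of_lt_of_le (by positivity) hD
  have e : 6 / ε ^ 2 * (1 - W / D) - k =
      (6 * (D - W - k * δ * ε ^ 2 / 6) - k * ε ^ 2 * (D - δ)) / (ε ^ 2 * D) := by
    field_simp
    ring
  have hnum : |6 * (D - W - k * δ * ε ^ 2 / 6) - k * ε ^ 2 * (D - δ)| ≤
      6 * (C * (δ ^ 4 + σ * δ ^ 2)) + k * δ ^ 2 * (C * δ ^ 2) := by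
    refine (abs_sub _ _).trans ?_
    rw [abs_mul, abs_mul, abs_of_pos (by norm_num : (0:ℝ) < 6),
      abs_of_nonneg (by positivity : 0 ≤ k * ε ^ 2)]
    gcongr
  have hden : c ^ 2 * δ ^ 3 / 2 ≤ ε ^ 2 * D := by
    calc c ^ 2 * δ ^ 3 / 2 = (c * δ) ^ 2 * (δ / 2) := by ring
      _ ≤ ε ^ 2 * D := by gcongr
  rw [e, abs_div, abs_of_pos (by positivity : 0 < ε ^ 2 * D)]
  calc _ ≤ (6 * (C * (δ ^ 4 + σ * δ ^ 2)) + k * δ ^ 2 * (C * δ ^ 2)) / (c ^ 2 * δ ^ 3 / 2) := by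
        gcongr
    _ = _ := by field_simp; ring

lemma exists_geo (δ₀ : ℝ) (hδ₀ : 0 < δ₀) (γ : ℝ → E2) (hγ : ContDiff ℝ (⊤ : ℕ∞) γ)
    (hunit : ∀ α : ℝ, ‖deriv γ α‖ = 1)
    (hcurv : ∀ α ∈ Icc (-δ₀) (2 * δ₀), deriv (deriv γ) α ≠ 0)
    (n : ℝ → E2) (hn : ∀ α : ℝ, n α = ‖deriv (deriv γ) α‖⁻¹ • deriv (deriv γ) α) :
    ∃ γ3 γ4 K, Geo γ (deriv γ) (deriv (deriv γ)) γ3 γ4 n (-(δ₀ / 2)) (3 * δ₀ / 2) K := by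
  obtain ⟨g0, c1⟩ := contDiff_infty_iff_deriv.1 hγ
  obtain ⟨g1, c2⟩ := contDiff_infty_iff_deriv.1 c1
  obtain ⟨g2, c3⟩ := contDiff_infty_iff_deriv.1 c2
  obtain ⟨g3, c4⟩ := contDiff_infty_iff_deriv.1 c3
  set γ1 := deriv γ
  set γ2 := deriv γ1
  set γ3 := deriv γ2
  set γ4 := deriv γ3
  set I := Icc (-(δ₀ / 2)) (3 * δ₀ / 2) with hI
  have hIc : IsCompact I := isCompact_Icc
  obtain ⟨C0, hC0⟩ := hIc.exists_bound_of_continuousOn hγ.continuous.continuousOn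
  obtain ⟨C2, hC2⟩ := hIc.exists_bound_of_continuousOn c2.continuous.continuousOn
  obtain ⟨C3, hC3⟩ := hIc.exists_bound_of_continuousOn c3.continuous.continuousOn
  obtain ⟨C4, hC4⟩ := hIc.exists_bound_of_continuousOn c4.continuous.continuousOn
  have d1 : ∀ s, HasDerivAt γ1 (γ2 s) s := fun s => (g1 s).hasDerivAt
  have d2 : ∀ s, HasDerivAt γ2 (γ3 s) s := fun s => (g2 s).hasDerivAt
  have o12 : ∀ s, inner ℝ (γ1 s) (γ2 s) = 0 := by
    intro s
    have h1 : HasDerivAt (fun s => inner ℝ (γ1 s) (γ1 s))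
      (inner ℝ (γ1 s) (γ2 s) + inner ℝ (γ2 s) (γ1 s)) s := (d1 s).inner ℝ (d1 s)
    have h2 : (fun s => inner ℝ (γ1 s) (γ1 s)) = fun _ => (1 : ℝ) := by
      ext s; rw [real_inner_self_eq_norm_sq, hunit]; norm_num
    rw [h2] at h1
    have := h1.unique (hasDerivAt_const s (1 : ℝ))
    rw [real_inner_comm (γ1 s) (γ2 s)] at this
    linarith
  have o1n : ∀ s, inner ℝ (γ1 s) (n s) = 0 := by
    intro s; rw [hn, real_inner_smul_right, o12, mul_zero]
  have un : ∀ s ∈ Icc (-δ₀) (2 * δ₀), ‖n s‖ = 1 := by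
    intro s hs
    rw [hn, norm_smul, norm_inv, norm_norm, inv_mul_cancel₀ (norm_ne_zero_iff.2 (hcurv s hs))]
  have hII : ∀ s ∈ I, s ∈ Ioo (-δ₀) (2 * δ₀) := fun s hs =>
    ⟨by linarith [hs.1], by linarith [hs.2]⟩
  have un2 : ∀ s ∈ Icc (-δ₀) (2 * δ₀), ‖γ2 s‖ • n s = γ2 s := by
    intro s hs
    rw [hn, smul_smul, mul_inv_cancel₀ (norm_ne_zero_iff.2 (hcurv s hs)), one_smul]
  have dn : ∀ s ∈ I, HasDerivAt n (-(‖γ2 s‖ • γ1 s)) s := by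
    intro s hs
    have hs' := hII s hs
    have hne : γ2 s ≠ 0 := hcurv s (Ioo_subset_Icc_self hs')
    have hdn : DifferentiableAt ℝ n s := by
      have : n = fun α => ‖γ2 α‖⁻¹ • γ2 α := funext hn
      rw [this]
      exact (((g2 s).norm ℝ hne).inv (norm_ne_zero_iff.2 hne)).smul (g2 s)
    have hd := hdn.hasDerivAt
    have a1 : inner ℝ (deriv n s) (n s) = 0 := by
      have h1 := hd.inner ℝ hd
      have h2 : (fun s => inner ℝ (n s) (n s)) =ᶠ[nhds s] fun _ => (1 : ℝ) := by
        filter_upwards [isOpen_Ioo.mem_nhds hs'] with t ht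
        rw [real_inner_self_eq_norm_sq, un t (Ioo_subset_Icc_self ht)]; norm_num
      have := (h1.congr_of_eventuallyEq h2.symm).unique (hasDerivAt_const s (1 : ℝ))
      rw [real_inner_comm (deriv n s) (n s)] at this
      linarith
    have a2 : inner ℝ (deriv n s) (γ1 s) = -‖γ2 s‖ := by
      have h1 := (d1 s).inner ℝ hd
      have h2 : (fun s => inner ℝ (γ1 s) (n s)) = fun _ => (0 : ℝ) := funext o1n
      rw [h2] at h1
      have h3 := h1.unique (hasDerivAt_const s (0 : ℝ))
      have h4 : inner ℝ (γ2 s) (n s) = ‖γ2 s‖ := by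
        rw [hn, real_inner_smul_right, real_inner_self_eq_norm_sq, pow_two, ← mul_assoc,
          inv_mul_cancel₀ (norm_ne_zero_iff.2 hne), one_mul]
      rw [h4, real_inner_comm] at h3
      linarith
    have h0 := eq_zero_of_orth (γ1 s) (n s) (deriv n s + ‖γ2 s‖ • γ1 s) (hunit s)
      (un s (Ioo_subset_Icc_self hs')) (o1n s)
      (by rw [inner_add_left, real_inner_smul_left, a2, real_inner_self_eq_norm_sq, hunit]; ring)
      (by rw [inner_add_left, real_inner_smul_left, a1, o1n]; ring)
    rw [← eq_neg_of_add_eq_zero_left h0]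
    exact hd
  refine ⟨γ3, γ4, 1 + |C0| + |C2| + |C3| + |C4|, ?_⟩
  have l0 := le_abs_self C0
  have l2 := le_abs_self C2
  have l3 := le_abs_self C3
  have l4 := le_abs_self C4
  have m0 := abs_nonneg C0
  have m2 := abs_nonneg C2
  have m3 := abs_nonneg C3
  have m4 := abs_nonneg C4
  exact {
    d0 := fun s => (g0 s).hasDerivAt
    d1 := d1
    d2 := d2
    d3 := fun s => (g3 s).hasDerivAt
    dn := dn
    u1 := hunit
    un := fun s hs => un s (Ioo_subset_Icc_self (hII s hs))
    un2 := fun s hs => un2 s (Ioo_subset_Icc_self (hII s hs))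
    o1 := fun s _ => o1n s
    K1 := by linarith
    b0 := fun s hs => (hC0 s hs).trans (by linarith)
    b2 := fun s hs => (hC2 s hs).trans (by linarith)
    b3 := fun s hs => (hC3 s hs).trans (by linarith)
    b4 := fun s hs => (hC4 s hs).trans (by linarith) }

/-- Regime `ε = Θ(δ)`, `σ = o(δ)`: the rescaled coarse extrinsic curvature of a planar curve
recovers `1/R²`. -/
theorem planar_curve_regime_epsilon
    (δ₀ : ℝ) (hδ₀ : 0 < δ₀)
    (γ : ℝ → EuclideanSpace ℝ (Fin 2)) (hγ : ContDiff ℝ (⊤ : ℕ∞) γ)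
    (hunit : ∀ α : ℝ, ‖deriv γ α‖ = 1)
    (hcurv : ∀ α ∈ Icc (-δ₀) (2 * δ₀), deriv (deriv γ) α ≠ 0)
    (R : ℝ → ℝ) (hR : ∀ α : ℝ, R α = ‖deriv (deriv γ) α‖⁻¹)
    (n : ℝ → EuclideanSpace ℝ (Fin 2)) (hn : ∀ α : ℝ, n α = R α • deriv (deriv γ) α)
    (φ : ℝ × ℝ → EuclideanSpace ℝ (Fin 2)) (hφ : ∀ p : ℝ × ℝ, φ p = γ p.1 + p.2 • n p.1)
    (hinj : InjOn φ (Icc (-δ₀) (2 * δ₀) ×ˢ Icc (-δ₀) δ₀))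
    (hreach : ∀ α ∈ Icc (-δ₀) (2 * δ₀), δ₀ < R α)
    (μ : ℝ → ℝ → ℝ → Measure (EuclideanSpace ℝ (Fin 2)))
    (hμ : ∀ t σ ε : ℝ, μ t σ ε = normRestrict (φ '' (Ioo (t - ε) (t + ε) ×ˢ Ioo (-σ) σ)))
    (σf εf : ℝ → ℝ)
    (hpos : ∀ δ ∈ Ioc (0:ℝ) δ₀, 0 < σf δ ∧ 0 < εf δ ∧ max (σf δ) (εf δ) ≤ δ / 4)
    (c C' : ℝ) (hc : 0 < c) (hC' : 0 < C')
    (hΘ : ∀ δ ∈ Ioc (0:ℝ) δ₀, c * δ ≤ εf δ ∧ εf δ ≤ C' * δ)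
    (ho : Tendsto (fun δ => σf δ / δ) (nhdsWithin 0 (Ioi 0)) (nhds 0)) :
    Tendsto (fun δ => 6 / εf δ ^ 2 *
        (1 - W1 (μ 0 (σf δ) (εf δ)) (μ δ (σf δ) (εf δ)) / ‖γ 0 - γ δ‖))
      (nhdsWithin 0 (Ioi 0)) (nhds (1 / R 0 ^ 2)) := by
  have hn' : ∀ α : ℝ, n α = ‖deriv (deriv γ) α‖⁻¹ • deriv (deriv γ) α := fun α => by
    rw [hn, hR]
  obtain ⟨γ3, γ4, K, G⟩ := exists_geo δ₀ hδ₀ γ hγ hunit hcurv n hn'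
  have hK := G.K1
  have hφm : Measurable φ := by
    have h2 : Continuous (deriv (deriv γ)) :=
      continuous_iff_continuousAt.2 fun s => (G.d2 s).continuousAt
    have h3 : Measurable n := by
      rw [funext hn']
      exact h2.norm.measurable.inv.smul h2.measurable
    have h4 := hγ.continuous.measurable
    rw [funext hφ]
    fun_prop
  have hlim : Tendsto (fun δ => (12 * (100 * K ^ 4) * (δ + σf δ / δ) +
      2 * ‖deriv (deriv γ) 0‖ ^ 2 * (100 * K ^ 4) * δ) / c ^ 2)
      (nhdsWithin 0 (Ioi 0)) (nhds 0) := by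
    have hid : Tendsto (fun δ : ℝ => δ) (nhdsWithin 0 (Ioi 0)) (nhds 0) :=
      tendsto_id.mono_left nhdsWithin_le_nhds
    have := (((hid.add ho).const_mul (12 * (100 * K ^ 4))).add
      (hid.const_mul (2 * ‖deriv (deriv γ) 0‖ ^ 2 * (100 * K ^ 4)))).div_const (c ^ 2)
    simpa using this
  have hR0 : 1 / R 0 ^ 2 = ‖deriv (deriv γ) 0‖ ^ 2 := by
    rw [hR]; simp
  rw [hR0, tendsto_iff_dist_tendsto_zero]
  refine squeeze_zero' (Eventually.of_forall fun _ => dist_nonneg) ?_ hlim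
  have ev1 : ∀ᶠ δ in nhdsWithin (0:ℝ) (Ioi 0), δ ∈ Ioc 0 (min δ₀ (1 / (200 * K ^ 4))) :=
    Ioc_mem_nhdsGT (lt_min hδ₀ (by positivity))
  have ev2 : ∀ᶠ δ in nhdsWithin (0:ℝ) (Ioi 0), σf δ / δ < 1 / 16 :=
    ho.eventually_lt_const (by norm_num)
  filter_upwards [ev1, ev2] with δ h1 h2
  have hδ : 0 < δ := h1.1
  have hδ0 : δ ≤ δ₀ := h1.2.trans (min_le_left _ _)
  have hδK : 200 * K ^ 4 * δ ≤ 1 := by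
    have := h1.2.trans (min_le_right _ _)
    rw [le_div_iff₀ (by positivity)] at this
    linarith
  have hK4 : K ^ 2 ≤ K ^ 4 := pow_le_pow_right₀ hK (by norm_num)
  have hδ1 : 100 * K ^ 2 * δ ≤ 1 := by
    have : K ^ 2 * δ ≤ K ^ 4 * δ := by gcongr
    have : 0 ≤ K ^ 4 * δ := by positivity
    linarith
  obtain ⟨hσ0, hε0, hmax⟩ := hpos δ ⟨hδ, hδ0⟩
  obtain ⟨hcε, -⟩ := hΘ δ ⟨hδ, hδ0⟩
  have hε : εf δ ≤ δ / 4 := (le_max_right _ _).trans hmax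
  have hσ : σf δ ≤ δ / 16 := by
    rw [div_lt_iff₀ hδ] at h2
    linarith
  obtain ⟨e1, e2⟩ := G.main_est φ hφ hφm hδ hδ1 hσ0 hε0 hε hσ (by linarith) (by linarith)
    (hinj.mono (Set.prod_mono (Icc_subset_Icc (by linarith) (by linarith))
      (Icc_subset_Icc (by linarith) (by linarith))))
  rw [Real.dist_eq, hμ, hμ]
  refine final_alg hδ hc hσ0 hcε (by linarith) (by positivity) (by positivity) ?_ e1 e2
  have := (abs_le.1 e2).1
  nlinarith
end

section
/- Let X be a complete separable metric space, let k, ℓ > 0 be real numbers, δ₀ > 0, and C₁, C₂ ≥ 0. For each δ ∈ (0, δ₀] let μ^δ and μ₂^δ be probability measures on X with finite first moment, and let T^δ : X → X be a measurable map which is an approximate transport from μ^δ to μ₂^δ of degree k, i.e. T^δ_* μ^δ is absolutely continuous with respect to μ₂^δ and |(d(T^δ_* μ^δ)/dμ₂^δ)(x) − 1| ≤ C₂·δ^k for μ₂^δ-almost every x. Suppose moreover that the support of μ₂^δ is nonempty with diameter at most C₁·δ^ℓ. Then there exists a constant C > 0 such that for every δ ∈ (0, δ₀], |W₁(μ^δ,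 μ₂^δ) − W₁(μ^δ, T^δ_* μ^δ)| ≤ C·δ^{k+ℓ}. -/
open MeasureTheory Set

/-- The topological support of a measure: points all of whose neighbourhoods have positive
measure. -/
def msupport {X : Type*} [TopologicalSpace X] [MeasurableSpace X] (μ : Measure X) : Set X :=
  {x | ∀ U ∈ nhds x, 0 < μ U}

open ProbabilityTheory ENNReal in
lemma aux_glue {X : Type*} [MetricSpace X] [MeasurableSpace X] [BorelSpace X]
    [SecondCountableTopology X] [StandardBorelSpace X] [Nonempty X]
    {ν₁ ν₂ μ : Measure X} (π ρ : Measure (X × X)) [IsProbabilityMeasure π] [IsProbabilityMeasure ρ]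
    (hπ1 : π.map Prod.fst = μ) (hπ2 : π.map Prod.snd = ν₁)
    (hρ1 : ρ.map Prod.fst = ν₁) (hρ2 : ρ.map Prod.snd = ν₂) :
    ∃ π' : Measure (X × X), IsProbabilityMeasure π' ∧ π'.map Prod.fst = μ ∧ π'.map Prod.snd = ν₂ ∧
      ∫⁻ p, edist p.1 p.2 ∂π' ≤ ∫⁻ p, edist p.1 p.2 ∂π + ∫⁻ p, edist p.1 p.2 ∂ρ := by
  set κ : Kernel (X × X) X := ρ.condKernel.comap Prod.snd measurable_snd with hκ
  set Q : Measure ((X × X) × X) := π ⊗ₘ κ with hQ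
  have hQ1 : Q.map Prod.fst = π := by
    have := Measure.fst_compProd π κ
    exact this
  have hQ2 : Q.map (fun p => (p.1.2, p.2)) = ρ := by
    have hd : ρ.fst ⊗ₘ ρ.condKernel = ρ := ρ.disintegrate ρ.condKernel
    have hf : ρ.fst = π.map Prod.snd := by rw [hπ2, ← hρ1]; rfl
    conv_rhs => rw [← hd, hf]
    ext s hs
    rw [Measure.map_apply (by fun_prop) hs, Measure.compProd_apply (by measurability),
      Measure.compProd_apply hs, lintegral_map (Kernel.measurable_kernel_prodMk_left hs) measurable_snd]
    rfl
  have m1 : Measurable (fun p : (X × X) × X => (p.1.1, p.2)) := by fun_prop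
  have m2 : Measurable (fun p : (X × X) × X => (p.1.2, p.2)) := by fun_prop
  refine ⟨Q.map (fun p => (p.1.1, p.2)), Measure.isProbabilityMeasure_map m1.aemeasurable, ?_, ?_, ?_⟩
  · rw [Measure.map_map measurable_fst m1, ← hπ1, ← hQ1, Measure.map_map measurable_fst measurable_fst]
    rfl
  · rw [Measure.map_map measurable_snd m1, ← hρ2, ← hQ2, Measure.map_map measurable_snd m2]
    rfl
  · have me : Measurable (fun p : X × X => edist p.1 p.2) := measurable_edist
    rw [lintegral_map me m1]
    conv_rhs => rw [← hQ1, ← hQ2]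
    rw [lintegral_map me measurable_fst, lintegral_map me m2,
      ← lintegral_add_left (by fun_prop)]
    exact lintegral_mono fun p => edist_triangle _ _ _

open ENNReal in
lemma aux_int {X : Type*} [MetricSpace X] [MeasurableSpace X] [BorelSpace X]
    [SecondCountableTopology X] (π : Measure (X × X)) :
    ∫ p, dist p.1 p.2 ∂π = (∫⁻ p, edist p.1 p.2 ∂π).toReal := by
  rw [integral_eq_lintegral_of_nonneg_ae (Filter.Eventually.of_forall fun p => dist_nonneg)
    (by fun_prop)]
  simp [edist_dist]

open ENNReal in
lemma aux_tri {X : Type*} [MetricSpace X] [MeasurableSpace X] [BorelSpace X]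
    [SecondCountableTopology X] [StandardBorelSpace X] [Nonempty X]
    {ν₁ ν₂ μ : Measure X} [IsProbabilityMeasure μ] [IsProbabilityMeasure ν₁]
    (ρ : Measure (X × X)) [IsProbabilityMeasure ρ]
    (hρ1 : ρ.map Prod.fst = ν₁) (hρ2 : ρ.map Prod.snd = ν₂)
    (hμ : ∃ x₀, ∫⁻ x, edist x₀ x ∂μ ≠ ∞) (hν : ∃ x₀, ∫⁻ x, edist x₀ x ∂ν₁ ≠ ∞)
    (E : ℝ) (hE : 0 ≤ E) (hc : ∫⁻ p, edist p.1 p.2 ∂ρ ≤ ENNReal.ofReal E) :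
    W1 μ ν₂ ≤ W1 μ ν₁ + E := by
  rw [← sub_le_iff_le_add]
  apply le_csInf
  · exact ⟨_, μ.prod ν₁, inferInstance, by simp [Measure.map_fst_prod],
      by simp [Measure.map_snd_prod], rfl⟩
  rintro c ⟨π, hp, h1, h2, rfl⟩
  obtain ⟨π', hp', h1', h2', h3⟩ := aux_glue π ρ h1 h2 hρ1 hρ2
  rw [sub_le_iff_le_add]
  have hfin : ∫⁻ p, edist p.1 p.2 ∂π ≠ ∞ := by
    obtain ⟨x, hx⟩ := hμ
    obtain ⟨y, hy⟩ := hν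
    have mx : Measurable (fun z : X => edist x z) := measurable_edist_right
    have my : Measurable (fun z : X => edist y z) := measurable_edist_right
    rw [← h1, lintegral_map mx measurable_fst] at hx
    rw [← h2, lintegral_map my measurable_snd] at hy
    have hle : ∫⁻ p, edist p.1 p.2 ∂π ≤
        ∫⁻ p, (edist x p.1 + (edist x y + edist y p.2)) ∂π := by
      refine lintegral_mono fun p => ?_
      calc edist p.1 p.2 ≤ edist p.1 x + edist x p.2 := edist_triangle _ _ _
        _ ≤ _ := by
          rw [edist_comm p.1 x]
          gcongr
          exact edist_triangle _ _ _
    refine ne_top_of_le_ne_top ?_ hle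
    rw [lintegral_add_left (by fun_prop), lintegral_add_left measurable_const]
    simp only [lintegral_const, measure_univ, mul_one]
    exact ENNReal.add_ne_top.2 ⟨hx, ENNReal.add_ne_top.2 ⟨edist_ne_top _ _, hy⟩⟩
  have hb : W1 μ ν₂ ≤ ∫ p, dist p.1 p.2 ∂π' := by
    apply csInf_le
    · refine ⟨0, ?_⟩
      rintro c ⟨_, _, _, _, rfl⟩
      exact integral_nonneg fun _ => dist_nonneg
    · exact ⟨π', hp', h1', h2', rfl⟩
  refine hb.trans ?_
  rw [aux_int, aux_int, ← ENNReal.toReal_ofReal hE, ← ENNReal.toReal_add hfin ofReal_ne_top]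
  apply ENNReal.toReal_mono (ENNReal.add_ne_top.2 ⟨hfin, ofReal_ne_top⟩)
  exact h3.trans (by gcongr)

lemma aux_supp {X : Type*} [TopologicalSpace X] [MeasurableSpace X]
    [SecondCountableTopology X] (μ : Measure X) : ∀ᵐ x ∂μ, x ∈ msupport μ := by
  change μ (msupport μ)ᶜ = 0
  apply measure_null_of_locally_null
  intro x hx
  simp only [msupport, mem_compl_iff, mem_setOf_eq, not_forall, not_lt, nonpos_iff_eq_zero] at hx
  obtain ⟨U, hU, h0⟩ := hx
  exact ⟨U, mem_nhdsWithin_of_mem_nhds hU, h0⟩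

open ENNReal in
lemma aux_coupling {X : Type*} [MetricSpace X] [MeasurableSpace X] [BorelSpace X]
    [SecondCountableTopology X] (ν μ₂ : Measure X) [IsProbabilityMeasure ν]
    [IsProbabilityMeasure μ₂] (hac : ν ≪ μ₂) (ε D : ℝ) (hε : 0 ≤ ε) (hD : 0 ≤ D)
    (hrn : ∀ᵐ x ∂μ₂, |(ν.rnDeriv μ₂ x).toReal - 1| ≤ ε)
    (hd : EMetric.diam (msupport μ₂) ≤ ENNReal.ofReal D) :
    ∃ ρ : Measure (X × X), IsProbabilityMeasure ρ ∧ ρ.map Prod.fst = ν ∧ ρ.map Prod.snd = μ₂ ∧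
      ∫⁻ p, edist p.1 p.2 ∂ρ ≤ ENNReal.ofReal (D * ε) := by
  set f := ν.rnDeriv μ₂ with hf
  have mf : Measurable f := Measure.measurable_rnDeriv _ _
  set σ := μ₂.withDensity (fun x => min (f x) 1) with hσ
  set a := μ₂.withDensity (fun x => f x - 1) with ha
  set b := μ₂.withDensity (fun x => 1 - f x) with hb
  have h1 : σ + a = ν := by
    rw [hσ, ha, ← withDensity_add_left (by fun_prop)]
    conv_rhs => rw [← Measure.withDensity_rnDeriv_eq _ _ hac]
    congr 1
    ext x
    simp only [Pi.add_apply, ← hf]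
    rcases le_total (f x) 1 with h | h
    · simp [h, tsub_eq_zero_of_le h]
    · simp [h, add_tsub_cancel_of_le]
  have h2 : σ + b = μ₂ := by
    rw [hσ, hb, ← withDensity_add_left (by fun_prop)]
    conv_rhs => rw [← withDensity_one (μ := μ₂)]
    congr 1
    ext x
    simp only [Pi.add_apply, Pi.one_apply]
    rcases le_total (f x) 1 with h | h
    · simp [h, add_tsub_cancel_of_le]
    · simp [h, tsub_eq_zero_of_le h]
  have u1 : σ univ + a univ = 1 := by rw [← Measure.add_apply, h1]; simp
  have u2 : σ univ + b univ = 1 := by rw [← Measure.add_apply, h2]; simp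
  have hσt : σ univ ≠ ∞ := by intro h; simp [h] at u1
  have hat : a univ ≠ ∞ := by intro h; simp [h] at u1
  have hab : a univ = b univ := (ENNReal.add_right_inj hσt).1 (u1.trans u2.symm)
  haveI : IsFiniteMeasure a := ⟨hat.lt_top⟩
  haveI : IsFiniteMeasure b := ⟨hab ▸ hat.lt_top⟩
  have haε : a univ ≤ ENNReal.ofReal ε := by
    rw [ha, withDensity_apply _ MeasurableSet.univ, Measure.restrict_univ]
    calc ∫⁻ x, f x - 1 ∂μ₂ ≤ ∫⁻ x, ENNReal.ofReal ε ∂μ₂ := by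
          apply lintegral_mono_ae
          filter_upwards [hrn, Measure.rnDeriv_lt_top ν μ₂] with x hx hx'
          rw [← hf] at hx'
          rw [← ENNReal.ofReal_toReal hx'.ne, ← ENNReal.ofReal_one,
            ← ENNReal.ofReal_sub _ zero_le_one]
          exact ENNReal.ofReal_le_ofReal ((le_abs_self _).trans hx)
      _ = _ := by simp
  set m := a univ with hm
  have hca : (m⁻¹ * m) • a = a := by
    by_cases h0 : m = 0
    · rw [Measure.measure_univ_eq_zero.1 h0]; simp
    · rw [ENNReal.inv_mul_cancel h0 hat, one_smul]
  have hcb : (m⁻¹ * m) • b = b := by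
    by_cases h0 : m = 0
    · rw [Measure.measure_univ_eq_zero.1 (hab.symm.trans h0)]; simp
    · rw [ENNReal.inv_mul_cancel h0 hat, one_smul]
  have md : Measurable (fun x : X => (x, x)) := by fun_prop
  have e1 : (σ.map (fun x => (x, x)) + m⁻¹ • a.prod b).map Prod.fst = ν := by
    rw [Measure.map_add _ _ measurable_fst, Measure.map_smul, Measure.map_fst_prod,
      Measure.map_map measurable_fst md, ← hab, smul_smul, hca]
    rw [← h1]; congr 1; exact Measure.map_id
  have e2 : (σ.map (fun x => (x, x)) + m⁻¹ • a.prod b).map Prod.snd = μ₂ := by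
    rw [Measure.map_add _ _ measurable_snd, Measure.map_smul, Measure.map_snd_prod,
      Measure.map_map measurable_snd md, smul_smul, hcb]
    rw [← h2]; congr 1; exact Measure.map_id
  refine ⟨σ.map (fun x => (x, x)) + m⁻¹ • a.prod b, ?_, e1, e2, ?_⟩
  · constructor
    have := congrArg (fun q : Measure X => q univ) e1
    simpa only [Measure.map_apply measurable_fst MeasurableSet.univ, preimage_univ,
      measure_univ] using this
  · have me : Measurable (fun p : X × X => edist p.1 p.2) := measurable_edist
    rw [lintegral_add_measure, lintegral_smul_measure, lintegral_map me md]
    simp only [edist_self, lintegral_zero, zero_add, smul_eq_mul]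
    have sa : ∀ᵐ x ∂a, x ∈ msupport μ₂ := (withDensity_absolutelyContinuous _ _).ae_le (aux_supp μ₂)
    have sb : ∀ᵐ x ∂b, x ∈ msupport μ₂ := (withDensity_absolutelyContinuous _ _).ae_le (aux_supp μ₂)
    have pa : ∀ᵐ p ∂a.prod b, p.1 ∈ msupport μ₂ := Measure.quasiMeasurePreserving_fst.ae sa
    have pb : ∀ᵐ p ∂a.prod b, p.2 ∈ msupport μ₂ := Measure.quasiMeasurePreserving_snd.ae sb
    have hI : ∫⁻ p, edist p.1 p.2 ∂(a.prod b) ≤ ENNReal.ofReal D * (m * m) := by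
      calc _ ≤ ∫⁻ p, ENNReal.ofReal D ∂(a.prod b) := by
            apply lintegral_mono_ae
            filter_upwards [pa, pb] with p h h'
            exact (EMetric.edist_le_diam_of_mem h h').trans hd
        _ = _ := by
            rw [lintegral_const, ← univ_prod_univ, Measure.prod_prod, ← hab]
    calc _ ≤ m⁻¹ * (ENNReal.ofReal D * (m * m)) := by gcongr
      _ = ENNReal.ofReal D * ((m⁻¹ * m) * m) := by ring
      _ ≤ ENNReal.ofReal D * (1 * ENNReal.ofReal ε) := by
          gcongr
          exact ENNReal.inv_mul_le_one m
      _ = _ := by rw [one_mul, ENNReal.ofReal_mul hD]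

open ENNReal in
lemma aux_mom {X : Type*} [MetricSpace X] [MeasurableSpace X] [BorelSpace X]
    [SecondCountableTopology X] {μ : Measure X}
    (h : ∃ x₀ : X, Integrable (fun x => dist x₀ x) μ) : ∃ x₀, ∫⁻ x, edist x₀ x ∂μ ≠ ∞ := by
  obtain ⟨x, hx⟩ := h
  refine ⟨x, ?_⟩
  have := hx.lintegral_lt_top.ne
  simpa only [edist_dist] using this

/-- If `T^δ` is an approximate transport map from `μ^δ` to `μ₂^δ` of degree `k` and the
support of `μ₂^δ` has diameter `O(δ^ℓ)`, then
`|W₁(μ^δ, μ₂^δ) − W₁(μ^δ, T^δ_* μ^δ)| = O(δ^{k+ℓ})`. -/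
theorem approximate_transport_w1
    {X : Type*} [MetricSpace X] [CompleteSpace X] [TopologicalSpace.SeparableSpace X]
    [MeasurableSpace X] [BorelSpace X]
    (k l δ₀ : ℝ) (hk : 0 < k) (hl : 0 < l) (hδ₀ : 0 < δ₀)
    (C₁ C₂ : ℝ) (hC₁ : 0 ≤ C₁) (hC₂ : 0 ≤ C₂)
    (μ μ₂ : ℝ → Measure X) (T : ℝ → X → X)
    (hprob : ∀ δ ∈ Ioc (0:ℝ) δ₀, IsProbabilityMeasure (μ δ) ∧ IsProbabilityMeasure (μ₂ δ))
    (hmom : ∀ δ ∈ Ioc (0:ℝ) δ₀, (∃ x₀ : X, Integrable (fun x => dist x₀ x) (μ δ)) ∧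
      (∃ x₀ : X, Integrable (fun x => dist x₀ x) (μ₂ δ)))
    (hTmeas : ∀ δ ∈ Ioc (0:ℝ) δ₀, Measurable (T δ))
    (hac : ∀ δ ∈ Ioc (0:ℝ) δ₀, (μ δ).map (T δ) ≪ μ₂ δ)
    (hrn : ∀ δ ∈ Ioc (0:ℝ) δ₀,
      ∀ᵐ x ∂(μ₂ δ), |(((μ δ).map (T δ)).rnDeriv (μ₂ δ) x).toReal - 1| ≤ C₂ * δ ^ k)
    (hsupp : ∀ δ ∈ Ioc (0:ℝ) δ₀, (msupport (μ₂ δ)).Nonempty ∧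
      EMetric.diam (msupport (μ₂ δ)) ≤ ENNReal.ofReal (C₁ * δ ^ l)) :
    ∃ C > (0:ℝ), ∀ δ ∈ Ioc (0:ℝ) δ₀,
      |W1 (μ δ) (μ₂ δ) - W1 (μ δ) ((μ δ).map (T δ))| ≤ C * δ ^ (k + l) := by
  haveI : SecondCountableTopology X := UniformSpace.secondCountable_of_separable X
  haveI : PolishSpace X := inferInstance
  refine ⟨C₁ * C₂ + 1, by positivity, fun δ hδ => ?_⟩
  obtain ⟨hp1, hp2⟩ := hprob δ hδ
  obtain ⟨hm1, hm2⟩ := hmom δ hδ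
  haveI : Nonempty X := ⟨hm1.choose⟩
  have hδ0 : 0 < δ := hδ.1
  haveI : IsProbabilityMeasure ((μ δ).map (T δ)) :=
    Measure.isProbabilityMeasure_map (hTmeas δ hδ).aemeasurable
  have hD : 0 ≤ C₁ * δ ^ l := by positivity
  have hε : 0 ≤ C₂ * δ ^ k := by positivity
  obtain ⟨ρ, hρ, r1, r2, hc⟩ := aux_coupling ((μ δ).map (T δ)) (μ₂ δ) (hac δ hδ) _ _ hε hD
    (hrn δ hδ) (hsupp δ hδ).2
  have hE : 0 ≤ C₁ * δ ^ l * (C₂ * δ ^ k) := mul_nonneg hD hε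
  have M1 := aux_mom hm1
  have M2 := aux_mom hm2
  have me : Measurable (fun p : X × X => edist p.1 p.2) := measurable_edist
  have M3 : ∃ x₀, ∫⁻ x, edist x₀ x ∂((μ δ).map (T δ)) ≠ ⊤ := by
    obtain ⟨x, hx⟩ := M2
    have mx : Measurable (fun z : X => edist x z) := measurable_edist_right
    refine ⟨x, ?_⟩
    rw [← r2, lintegral_map mx measurable_snd] at hx
    rw [← r1, lintegral_map mx measurable_fst]
    refine ne_top_of_le_ne_top (ENNReal.add_ne_top.2
      ⟨hx, ne_top_of_le_ne_top ENNReal.ofReal_ne_top hc⟩) ?_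
    rw [← lintegral_add_left (by fun_prop)]
    refine lintegral_mono fun p => ?_
    have := edist_triangle x p.2 p.1
    rwa [edist_comm p.2 p.1] at this
  have A := aux_tri ρ r1 r2 M1 M3 _ hE hc
  haveI : IsProbabilityMeasure (ρ.map Prod.swap) :=
    Measure.isProbabilityMeasure_map measurable_swap.aemeasurable
  have B := aux_tri (μ := μ δ) (ν₁ := μ₂ δ) (ν₂ := (μ δ).map (T δ)) (ρ.map Prod.swap)
    (by rw [Measure.map_map measurable_fst measurable_swap, ← r2]; rfl)
    (by rw [Measure.map_map measurable_snd measurable_swap, ← r1]; rfl) M1 M2 _ hE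
    (by
      rw [lintegral_map me measurable_swap]
      simpa only [Prod.fst_swap, Prod.snd_swap, edist_comm] using hc)
  have hpow : δ ^ (k + l) = δ ^ k * δ ^ l := Real.rpow_add hδ0 _ _
  have hpos : 0 < δ ^ (k + l) := by positivity
  have hfin : C₁ * δ ^ l * (C₂ * δ ^ k) ≤ (C₁ * C₂ + 1) * δ ^ (k + l) := by
    have : C₁ * δ ^ l * (C₂ * δ ^ k) = C₁ * C₂ * δ ^ (k + l) := by rw [hpow]; ring
    rw [this]; linarith
  rw [abs_le]
  constructor <;> linarith
end

section
/- Let n ∈ ℕ, x₀ ∈ ℝⁿ, δ ∈ (0, 1], and let μ be a probability measure on ℝⁿ whose support is contained in the closed ball B̄(x₀, δ/2). Let T : ℝⁿ → ℝⁿ be measurable with T(supp μ) ⊆ B̄(x₀, 2δ), and let f : ℝⁿ → ℝ be continuously differentiable. Suppose there are constants C₁, C₂, C₃ ≥ 0 such that: | f(Tz) − f(z) − ‖Tz − z‖ | ≤ C₁·δ⁴ and | f(Tz) − f(z) | ≤ C₂·δ for all z ∈ supp μ, and ‖∇f(z)‖ ≤ 1 + C₃·δ³ for all z ∈ B̄(x₀,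 2δ). Then | W₁(μ, T_* μ) − ∫ ‖Tz − z‖ dμ(z) | ≤ C·δ⁴, where the constant C depends only on C₁, C₂, C₃. -/
open MeasureTheory Set

/-- Kantorovich–Rubinstein test function estimate: if `f(Tz) − f(z) = ‖Tz − z‖ + O(δ⁴)` on
the support of `μ` and `‖∇f‖ ≤ 1 + O(δ³)` on `B̄(x₀, 2δ)`, then
`W₁(μ, T_*μ) = ∫ ‖Tz − z‖ dμ(z) + O(δ⁴)`, with a constant depending only on `C₁, C₂, C₃`. -/
theorem test_function_transport_estimate
    (C₁ C₂ C₃ : ℝ) (hC₁ : 0 ≤ C₁) (hC₂ : 0 ≤ C₂) (hC₃ : 0 ≤ C₃) :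
    ∃ C > (0:ℝ), ∀ (n : ℕ) (x₀ : EuclideanSpace ℝ (Fin n)) (δ : ℝ), δ ∈ Ioc (0:ℝ) 1 →
      ∀ μ : Measure (EuclideanSpace ℝ (Fin n)), IsProbabilityMeasure μ →
      msupport μ ⊆ Metric.closedBall x₀ (δ / 2) →
      ∀ T : EuclideanSpace ℝ (Fin n) → EuclideanSpace ℝ (Fin n), Measurable T →
      T '' msupport μ ⊆ Metric.closedBall x₀ (2 * δ) →
      ∀ f : EuclideanSpace ℝ (Fin n) → ℝ, ContDiff ℝ 1 f →
      (∀ z ∈ msupport μ, |f (T z) - f z - ‖T z - z‖| ≤ C₁ * δ ^ 4) →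
      (∀ z ∈ msupport μ, |f (T z) - f z| ≤ C₂ * δ) →
      (∀ z ∈ Metric.closedBall x₀ (2 * δ), ‖gradient f z‖ ≤ 1 + C₃ * δ ^ 3) →
      |W1 μ (μ.map T) - ∫ z, ‖T z - z‖ ∂μ| ≤ C * δ ^ 4 := by
  refine ⟨C₁ + 4 * C₃ + 1, by positivity, ?_⟩
  intro n x₀ δ hδ μ hμ hsupp T hT hTs f hf h1 _ h3
  obtain ⟨hδ0, hδ1⟩ := hδ
  have hae : ∀ᵐ z ∂μ, z ∈ msupport μ := by
    have h := Measure.support_mem_ae (μ := μ)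
    filter_upwards [h] with z hz
    exact (Measure.mem_support_iff_forall z).1 hz
  set B := Metric.closedBall x₀ (2 * δ) with hB
  have hBc : IsCompact B := isCompact_closedBall _ _
  have hBm : MeasurableSet B := hBc.isClosed.measurableSet
  have hfc : Continuous f := hf.continuous
  obtain ⟨K, hK⟩ := hBc.exists_bound_of_continuousOn hfc.continuousOn
  have haeB : ∀ᵐ z ∂μ, z ∈ B := by
    filter_upwards [hae] with z hz
    exact Metric.closedBall_subset_closedBall (by linarith) (hsupp hz)
  have haeT : ∀ᵐ z ∂μ, T z ∈ B := by
    filter_upwards [hae] with z hz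
    exact hTs ⟨z, hz, rfl⟩
  have hdist : ∀ a ∈ B, ∀ b ∈ B, dist a b ≤ 4 * δ := by
    intro a ha b hb
    have := dist_triangle_right a b x₀
    rw [hB, Metric.mem_closedBall] at ha hb
    linarith
  have hLip : ∀ a ∈ B, ∀ b ∈ B, f b - f a ≤ dist a b + 4 * C₃ * δ ^ 4 := by
    intro a ha b hb
    have hm := (convex_closedBall x₀ (2 * δ)).norm_image_sub_le_of_norm_fderiv_le (𝕜 := ℝ)
      (f := f) (C := 1 + C₃ * δ ^ 3)
      (fun x _ => (hf.differentiable (by norm_num)).differentiableAt)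
      (fun x hx => by
        have := h3 x hx
        rwa [gradient, LinearIsometryEquiv.norm_map] at this) ha hb
    have h4 := hdist a ha b hb
    rw [← dist_eq_norm b a, dist_comm b a, Real.norm_eq_abs] at hm
    have h5 := le_abs_self (f b - f a)
    have h6 : C₃ * δ ^ 3 * dist a b ≤ C₃ * δ ^ 3 * (4 * δ) :=
      mul_le_mul_of_nonneg_left h4 (by positivity)
    nlinarith
  have hI1 : Integrable (fun z => ‖T z - z‖) μ := by
    refine Integrable.of_bound (C := 4 * δ) (by fun_prop) ?_
    filter_upwards [haeB, haeT] with z h h'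
    rw [norm_norm, ← dist_eq_norm]
    exact hdist _ h' _ h
  have hIf : Integrable f μ := by
    refine Integrable.of_bound (C := K) hfc.aestronglyMeasurable ?_
    filter_upwards [haeB] with z h using hK z h
  have hIfT : Integrable (fun z => f (T z)) μ := by
    refine Integrable.of_bound (C := K) (hfc.measurable.comp hT).aestronglyMeasurable ?_
    filter_upwards [haeT] with z h using hK _ h
  have hlow : ∫ z, ‖T z - z‖ ∂μ - C₁ * δ ^ 4 ≤ ∫ z, f (T z) ∂μ - ∫ z, f z ∂μ := by
    rw [← integral_sub hIfT hIf]
    have : ∫ z, ‖T z - z‖ ∂μ - C₁ * δ ^ 4 = ∫ z, (‖T z - z‖ - C₁ * δ ^ 4) ∂μ := by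
      rw [integral_sub hI1 (integrable_const _)]; simp
    rw [this]
    refine integral_mono_ae (hI1.sub (integrable_const _)) (hIfT.sub hIf) ?_
    filter_upwards [hae] with z hz
    have := (abs_le.1 (h1 z hz)).1
    linarith
  have hup : W1 μ (μ.map T) ≤ ∫ z, ‖T z - z‖ ∂μ := by
    refine csInf_le ⟨0, ?_⟩ ⟨μ.map (fun z => (z, T z)), ?_, ?_, ?_, ?_⟩
    · rintro c ⟨π, -, -, -, rfl⟩
      exact integral_nonneg fun _ => dist_nonneg
    · exact Measure.isProbabilityMeasure_map (by fun_prop)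
    · rw [Measure.map_map measurable_fst (by fun_prop)]
      exact Measure.map_id
    · rw [Measure.map_map measurable_snd (by fun_prop)]
      rfl
    · rw [integral_map (by fun_prop) (by fun_prop)]
      simp [dist_eq_norm, norm_sub_rev]
  have hlo : ∫ z, ‖T z - z‖ ∂μ - C₁ * δ ^ 4 - 4 * C₃ * δ ^ 4 ≤ W1 μ (μ.map T) := by
    refine le_csInf ⟨_, μ.map (fun z => (z, T z)), ?_, ?_, ?_, rfl⟩ ?_
    · exact Measure.isProbabilityMeasure_map (by fun_prop)
    · rw [Measure.map_map measurable_fst (by fun_prop)]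
      exact Measure.map_id
    · rw [Measure.map_map measurable_snd (by fun_prop)]
      rfl
    rintro c ⟨π, hπ, hπ1, hπ2, rfl⟩
    have e1 : ∀ᵐ p ∂π, p.1 ∈ B := by
      rw [← hπ1] at haeB
      exact ae_of_ae_map (by fun_prop) haeB
    have e2 : ∀ᵐ p ∂π, p.2 ∈ B := by
      have : ∀ᵐ z ∂(μ.map T), z ∈ B := (ae_map_iff hT.aemeasurable hBm).2 haeT
      rw [← hπ2] at this
      exact ae_of_ae_map (by fun_prop) this
    have i1 : Integrable (fun p : _ × _ => f p.1) π := by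
      refine Integrable.of_bound (C := K) (hfc.comp continuous_fst).aestronglyMeasurable ?_
      filter_upwards [e1] with z h using hK _ h
    have i2 : Integrable (fun p : _ × _ => f p.2) π := by
      refine Integrable.of_bound (C := K) (hfc.comp continuous_snd).aestronglyMeasurable ?_
      filter_upwards [e2] with z h using hK _ h
    have i3 : Integrable (fun p : _ × _ => dist p.1 p.2) π := by
      refine Integrable.of_bound (C := 4 * δ) (by fun_prop) ?_
      filter_upwards [e1, e2] with z h h'
      rw [Real.norm_eq_abs, abs_of_nonneg dist_nonneg]
      exact hdist _ h _ h'
    have q1 : ∫ p, f p.1 ∂π = ∫ z, f z ∂μ := by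
      conv_rhs => rw [← hπ1]
      rw [integral_map (by fun_prop) hfc.aestronglyMeasurable]
    have q2 : ∫ p, f p.2 ∂π = ∫ z, f (T z) ∂μ := by
      rw [← integral_map hT.aemeasurable hfc.aestronglyMeasurable, ← hπ2,
        integral_map (by fun_prop) hfc.aestronglyMeasurable]
    have key : ∫ p, (f p.2 - f p.1) ∂π ≤ ∫ p, (dist p.1 p.2 + 4 * C₃ * δ ^ 4) ∂π := by
      refine integral_mono_ae (i2.sub i1) (i3.add (integrable_const _)) ?_
      filter_upwards [e1, e2] with z h h'
      exact hLip _ h _ h'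
    rw [integral_sub i2 i1, integral_add i3 (integrable_const _), q1, q2] at key
    simp at key
    linarith
  have : 0 < δ ^ 4 := by positivity
  have : 0 ≤ C₁ * δ ^ 4 := by positivity
  have : 0 ≤ C₃ * δ ^ 4 := by positivity
  rw [abs_le]
  constructor <;> nlinarith
end
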